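/- arXiv:1312.2370 — 9 statements merged into one kernel-verified Lean document; each statement's English description precedes it below -/
import Mathlib

section
/- The difference equation n = x_n (x_{n+1} + x_n + x_{n-1}) for all n ≥ 1, with initial value x_0 = 0, has exactly one solution (x_n)_{n≥1} with x_n > 0 for all n ≥ 1, and this solution has x_1 = 2 Γ(3/4)/Γ(1/4). -/
/-!
Uniqueness is a convexity argument. A positive solution satisfies `x n ^ 2 ≤ n`. For two positive
solutions `x`, `y` the signed difference `e n = (-1) ^ n * (x n - y n)` satisfies
`e (n + 2) - 2 * e (n + 1) + e n = ((n + 1) / (x (n + 1) * y (n + 1)) - 1) * e (n + 1)`, with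
nonnegative factor, and `e 0 = 0`. If `e 1 > 0`, then `e` is convex, so `e n ≥ n * e 1`, which
contradicts `|e n| ≤ √n`. Hence `x 1 = y 1`, and the recurrence determines everything else.

Existence comes from the orthogonal polynomials of the even weight `exp (-b * x ^ 4)`, which satisfy
`X * P n = P (n + 1) + a n * P (n - 1)` with `a n = h n / h (n - 1)`, where `h n > 0` is the squared
norm of `P n`. Integrating the derivative of `P (n + 1) * P n * exp (-b * x ^ 4)` gives
`(n + 1) * h n = 4 * b * h (n + 1) * (a (n + 2) + a (n + 1) + a n)`, so for `b = 1 / 4` the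
sequence `a` is a positive solution, and `a 1` is the quotient of the second and zeroth moments of
the weight.
-/

open Asymptotics Filter MeasureTheory Polynomial Real

/-! ### Uniqueness of positive solutions -/

/-- A positive solution, with initial value `0`, of the difference equation
`c n = x n * (x (n + 1) + x n + x (n - 1))`, `n ≥ 1`. The index is shifted by one so that no
truncated subtraction occurs. -/
structure IsPositiveSolution (c x : ℕ → ℝ) : Prop where
  zero : x 0 = 0
  eq : ∀ n, c (n + 1) = x (n + 1) * (x (n + 2) + x (n + 1) + x n)
  pos : ∀ n, 0 < x (n + 1)

lemma isPositiveSolution_iff {c x : ℕ → ℝ} :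
    IsPositiveSolution c x ↔
      x 0 = 0 ∧ (∀ n : ℕ, 1 ≤ n → c n = x n * (x (n + 1) + x n + x (n - 1))) ∧
        ∀ n : ℕ, 1 ≤ n → 0 < x n := by
  refine ⟨fun h => ⟨h.zero, fun n hn => ?_, fun n hn => ?_⟩, fun ⟨h0, heq, hpos⟩ =>
    ⟨h0, fun n => heq (n + 1) n.succ_pos, fun n => hpos (n + 1) n.succ_pos⟩⟩
  all_goals obtain ⟨n, rfl⟩ := Nat.exists_eq_add_of_le' hn
  exacts [h.eq n, h.pos n]

/-- The convexity inequality is only assumed where `u` is nonnegative: linear growth propagates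
nonnegativity. -/
lemma natCast_mul_le_of_convex {K : Type*} [CommRing K] [LinearOrder K] [IsStrictOrderedRing K]
    {u : ℕ → K} (h0 : u 0 = 0) (h1 : 0 ≤ u 1)
    (hconv : ∀ n, 0 ≤ u (n + 1) → 0 ≤ u (n + 2) - 2 * u (n + 1) + u n) (n : ℕ) :
    n * u 1 ≤ u n := by
  suffices h : n * u 1 ≤ u n ∧ u 1 ≤ u (n + 1) - u n from h.1
  induction n with
  | zero => simp [h0]
  | succ n ih =>
    have hlin : ((n + 1 : ℕ) : K) * u 1 ≤ u (n + 1) := by push_cast; linarith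
    have hnonneg : 0 ≤ u (n + 1) := le_trans (by positivity) hlin
    exact ⟨hlin, by linarith [hconv n hnonneg]⟩

lemma sq_sub_le_of_sq_le {K : Type*} [CommRing K] [LinearOrder K] [IsStrictOrderedRing K]
    {a b c : K} (ha : 0 ≤ a) (hb : 0 ≤ b) (hac : a ^ 2 ≤ c) (hbc : b ^ 2 ≤ c) :
    (a - b) ^ 2 ≤ c := by
  rcases le_total a b with h | h
  · exact (sq_le_sq' (by linarith) (by linarith)).trans hbc
  · exact (sq_le_sq' (by linarith) (by linarith)).trans hac

namespace IsPositiveSolution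

variable {c x y : ℕ → ℝ}

lemma nonneg (hx : IsPositiveSolution c x) : ∀ n, 0 ≤ x n
  | 0 => hx.zero.ge
  | n + 1 => (hx.pos n).le

lemma sq_le (hx : IsPositiveSolution c x) (n : ℕ) : x (n + 1) ^ 2 ≤ c (n + 1) := by
  have hsucc := mul_nonneg (hx.nonneg (n + 1)) (hx.nonneg (n + 2))
  have hpred := mul_nonneg (hx.nonneg (n + 1)) (hx.nonneg n)
  linarith [hx.eq n]

lemma mul_le (hx : IsPositiveSolution c x) (hy : IsPositiveSolution c y) (n : ℕ) :
    x (n + 1) * y (n + 1) ≤ c (n + 1) := by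
  linarith [two_mul_le_add_sq (x (n + 1)) (y (n + 1)), hx.sq_le n, hy.sq_le n]

lemma signed_sub_convex (hx : IsPositiveSolution c x) (hy : IsPositiveSolution c y) (n : ℕ)
    (hn : 0 ≤ (-1) ^ (n + 1) * (x (n + 1) - y (n + 1))) :
    0 ≤ (-1) ^ (n + 2) * (x (n + 2) - y (n + 2)) - 2 * ((-1) ^ (n + 1) * (x (n + 1) - y (n + 1)))
      + (-1) ^ n * (x n - y n) := by
  refine nonneg_of_mul_nonneg_right ?_ (mul_pos (hx.pos n) (hy.pos n))
  calc
    0 ≤ (c (n + 1) - x (n + 1) * y (n + 1)) * ((-1) ^ (n + 1) * (x (n + 1) - y (n + 1))) :=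
      mul_nonneg (sub_nonneg.2 (hx.mul_le hy n)) hn
    _ = _ := by linear_combination (-1) ^ n * (y (n + 1) * hx.eq n - x (n + 1) * hy.eq n)

lemma apply_one_le (hx : IsPositiveSolution c x) (hy : IsPositiveSolution c y)
    (hc : c =o[atTop] fun n => (n : ℝ) ^ 2) : x 1 ≤ y 1 := by
  by_contra! hlt
  set e : ℕ → ℝ := fun n => (-1) ^ n * (y n - x n) with he
  have he1 : 0 < e 1 := by simpa [he] using hlt
  have hgrowth : ∀ n : ℕ, n * e 1 ≤ e n :=
    natCast_mul_le_of_convex (by simp [he, hx.zero, hy.zero]) he1.le (hy.signed_sub_convex hx)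
  have hbound : ∀ n, e (n + 1) ^ 2 ≤ c (n + 1) := fun n => by
    have hsq : e (n + 1) ^ 2 = (y (n + 1) - x (n + 1)) ^ 2 := by
      rw [he, mul_pow, ← pow_mul, pow_mul', neg_one_sq, one_pow, one_mul]
    exact hsq ▸ sq_sub_le_of_sq_le (hy.nonneg _) (hx.nonneg _) (hy.sq_le n) (hx.sq_le n)
  obtain ⟨n, hcn, hn⟩ :=
    ((hc.def (half_pos (pow_pos he1 2))).and (eventually_ge_atTop 1)).exists
  obtain ⟨n, rfl⟩ := Nat.exists_eq_add_of_le' hn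
  have hpos : 0 < (((n + 1 : ℕ) : ℝ) * e 1) ^ 2 := by positivity
  have : (((n + 1 : ℕ) : ℝ) * e 1) ^ 2 ≤ (((n + 1 : ℕ) : ℝ) * e 1) ^ 2 / 2 := calc
    _ ≤ e (n + 1) ^ 2 := pow_le_pow_left₀ (by positivity) (hgrowth (n + 1)) 2
    _ ≤ c (n + 1) := hbound n
    _ ≤ ‖c (n + 1)‖ := le_abs_self _
    _ ≤ e 1 ^ 2 / 2 * ‖((n + 1 : ℕ) : ℝ) ^ 2‖ := hcn
    _ = _ := by rw [norm_of_nonneg (by positivity)]; ring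
  linarith

lemma eq_of_apply_one_eq (hx : IsPositiveSolution c x) (hy : IsPositiveSolution c y)
    (h1 : x 1 = y 1) : x = y := by
  funext n
  induction n using Nat.twoStepInduction with
  | zero => rw [hx.zero, hy.zero]
  | one => exact h1
  | more n hn hn1 =>
    have h := (hx.eq n).symm.trans (hy.eq n)
    rw [hn, hn1] at h
    linarith [mul_left_cancel₀ (hy.pos n).ne' h]

theorem unique (hx : IsPositiveSolution c x) (hy : IsPositiveSolution c y)
    (hc : c =o[atTop] fun n => (n : ℝ) ^ 2) : x = y :=
  hx.eq_of_apply_one_eq hy (le_antisymm (hx.apply_one_le hy hc) (hy.apply_one_le hx hc))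

end IsPositiveSolution

/-! ### Orthogonal polynomials of a linear functional -/

section OrthogonalPolynomials

lemma degree_sub_C_coeff_mul_lt {R : Type*} [Ring R] {p q : R[X]} (hp : p.Monic)
    (hq : q.degree < p.natDegree + 1) :
    (q - C (q.coeff p.natDegree) * p).degree < p.natDegree := by
  rw [degree_lt_iff_coeff_zero]
  intro k hk
  rcases hk.eq_or_lt with rfl | hlt
  · simp [hp.coeff_natDegree]
  · have hqk : q.coeff k = 0 := coeff_eq_zero_of_degree_lt (hq.trans_le (by exact_mod_cast hlt))
    simp [hqk, coeff_eq_zero_of_natDegree_lt hlt]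

lemma map_C_mul {R : Type*} [CommSemiring R] (L : R[X] →ₗ[R] R) (a : R) (p : R[X]) :
    L (C a * p) = a * L p := by
  rw [← smul_eq_C_mul, map_smul, smul_eq_mul]

variable {K : Type*} [Field K] (L : K[X] →ₗ[K] K)

/-- The monic orthogonal polynomials of the bilinear form `(p, q) ↦ L (p * q)`, defined by their
three-term recurrence. They are orthogonal only as long as no `L (P n * P n)` vanishes. -/
noncomputable def orthoPoly : ℕ → K[X]
  | 0 => 1
  | 1 => X - C (L X / L 1)
  | n + 2 =>
    (X - C (L (X * (orthoPoly (n + 1) * orthoPoly (n + 1))) /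
        L (orthoPoly (n + 1) * orthoPoly (n + 1)))) * orthoPoly (n + 1) -
      C (L (orthoPoly (n + 1) * orthoPoly (n + 1)) / L (orthoPoly n * orthoPoly n)) * orthoPoly n

/-- The squared norm `h n` of the `n`-th orthogonal polynomial. -/
noncomputable def orthoNormSq (n : ℕ) : K := L (orthoPoly L n * orthoPoly L n)

/-- The diagonal coefficient `L (X * P n ^ 2) / h n` of the three-term recurrence. -/
noncomputable def jacobiDiag (n : ℕ) : K :=
  L (X * (orthoPoly L n * orthoPoly L n)) / orthoNormSq L n

/-- The subdiagonal coefficient `h n / h (n - 1)` of the three-term recurrence, with value `0` at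
`n = 0`. -/
noncomputable def jacobiSubdiag : ℕ → K
  | 0 => 0
  | n + 1 => orthoNormSq L (n + 1) / orthoNormSq L n

/-- At `n = 0` the junk value `orthoPoly L (0 - 1)` is multiplied by `jacobiSubdiag L 0 = 0`. -/
lemma X_mul_orthoPoly (n : ℕ) :
    X * orthoPoly L n = orthoPoly L (n + 1) + C (jacobiDiag L n) * orthoPoly L n +
      C (jacobiSubdiag L n) * orthoPoly L (n - 1) := by
  cases n with
  | zero => simp [orthoPoly, jacobiDiag, jacobiSubdiag, orthoNormSq]
  | succ n =>
    simp only [orthoPoly, jacobiDiag, jacobiSubdiag, orthoNormSq, Nat.add_sub_cancel]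
    ring

lemma orthoPoly_add_two (n : ℕ) :
    orthoPoly L (n + 2) = (X - C (jacobiDiag L (n + 1))) * orthoPoly L (n + 1) -
      C (jacobiSubdiag L (n + 1)) * orthoPoly L n := rfl

lemma orthoPoly_monic_natDegree (n : ℕ) :
    (orthoPoly L n).Monic ∧ (orthoPoly L n).natDegree = n := by
  induction n using Nat.twoStepInduction with
  | zero => simp [orthoPoly]
  | one => simp [orthoPoly, monic_X_sub_C]
  | more n hn hn1 =>
    set p := (X - C (jacobiDiag L (n + 1))) * orthoPoly L (n + 1)
    have hp : p.Monic := (monic_X_sub_C _).mul hn1.1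
    have hdeg : p.natDegree = n + 2 := by
      rw [(monic_X_sub_C _).natDegree_mul hn1.1, hn1.2, natDegree_X_sub_C]
      ring
    have hlt : (C (jacobiSubdiag L (n + 1)) * orthoPoly L n).natDegree < p.natDegree := by
      have := natDegree_C_mul_le (jacobiSubdiag L (n + 1)) (orthoPoly L n)
      omega
    rw [orthoPoly_add_two]
    exact ⟨hp.sub_of_left (degree_lt_degree hlt),
      (natDegree_sub_eq_left_of_natDegree_lt hlt).trans hdeg⟩

lemma orthoPoly_monic (n : ℕ) : (orthoPoly L n).Monic := (orthoPoly_monic_natDegree L n).1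

@[simp]
lemma natDegree_orthoPoly (n : ℕ) : (orthoPoly L n).natDegree = n :=
  (orthoPoly_monic_natDegree L n).2

@[simp]
lemma coeff_orthoPoly_self (n : ℕ) : (orthoPoly L n).coeff n = 1 := by
  simpa using (orthoPoly_monic L n).coeff_natDegree

lemma apply_orthoPoly_add_two_mul (n : ℕ) (q : K[X]) :
    L (orthoPoly L (n + 2) * q) = L (orthoPoly L (n + 1) * (X * q)) -
      jacobiDiag L (n + 1) * L (orthoPoly L (n + 1) * q) -
      jacobiSubdiag L (n + 1) * L (orthoPoly L n * q) := by
  simp only [← map_C_mul, ← map_sub, orthoPoly_add_two]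
  congr 1
  ring

section Orthogonality

variable {L} (hL : ∀ n, orthoNormSq L n ≠ 0)
include hL

lemma jacobiDiag_mul_orthoNormSq (n : ℕ) :
    jacobiDiag L n * orthoNormSq L n = L (X * (orthoPoly L n * orthoPoly L n)) :=
  div_mul_cancel₀ _ (hL n)

lemma jacobiSubdiag_succ_mul_orthoNormSq (n : ℕ) :
    jacobiSubdiag L (n + 1) * orthoNormSq L n = orthoNormSq L (n + 1) :=
  div_mul_cancel₀ _ (hL n)

lemma orthoPoly_orthogonal (n : ℕ) : ∀ m < n, L (orthoPoly L n * orthoPoly L m) = 0 := by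
  induction n using Nat.twoStepInduction with
  | zero => simp
  | one =>
    intro m hm
    obtain rfl : m = 0 := by omega
    have h0 : L 1 ≠ 0 := by simpa [orthoNormSq, orthoPoly] using hL 0
    have hC : L (C (L X / L 1)) = L X := by
      rw [← mul_one (C _), map_C_mul, div_mul_cancel₀ _ h0]
    simp [orthoPoly, hC]
  | more n hn hn1 =>
    intro m hm
    rw [apply_orthoPoly_add_two_mul]
    rcases (by omega : m = n + 1 ∨ m < n + 1) with rfl | hlt
    · rw [mul_left_comm, ← jacobiDiag_mul_orthoNormSq hL, mul_comm (orthoPoly L n),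
        hn1 n n.lt_succ_self, orthoNormSq]
      ring
    rw [X_mul_orthoPoly, mul_add, mul_add, map_add, map_add, mul_left_comm _ (C _),
      mul_left_comm _ (C _), map_C_mul, map_C_mul, hn1 m hlt, hn1 (m - 1) (by omega)]
    rcases (by omega : m = n ∨ m < n) with rfl | hlt
    · have := jacobiSubdiag_succ_mul_orthoNormSq hL m
      simp only [orthoNormSq] at this
      rw [this]
      ring
    · rw [hn1 (m + 1) (by omega), hn m hlt]
      ring

lemma apply_orthoPoly_mul_eq_zero {n : ℕ} {q : K[X]} (hq : q.degree < n) :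
    L (orthoPoly L n * q) = 0 := by
  suffices h : ∀ m ≤ n, ∀ q : K[X], q.degree < m → L (orthoPoly L n * q) = 0 from h n le_rfl q hq
  intro m
  induction m with
  | zero =>
    intro _ q hq
    simp [show q = 0 by simpa using hq]
  | succ m ih =>
    intro hm q hq
    have h := ih (by omega) _ (by
      simpa using degree_sub_C_coeff_mul_lt (orthoPoly_monic L m) (by simpa using hq))
    rwa [mul_sub, map_sub, mul_left_comm, map_C_mul, orthoPoly_orthogonal hL n m hm, mul_zero,
      sub_zero] at h

lemma apply_orthoPoly_mul_eq_coeff_mul {n : ℕ} {q : K[X]} (hq : q.degree < n + 1) :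
    L (orthoPoly L n * q) = q.coeff n * orthoNormSq L n := by
  have hlt : (q - C (q.coeff n) * orthoPoly L n).degree < n := by
    simpa using degree_sub_C_coeff_mul_lt (orthoPoly_monic L n) (by simpa using hq)
  have h := apply_orthoPoly_mul_eq_zero hL hlt
  rwa [mul_sub, map_sub, mul_left_comm, map_C_mul, sub_eq_zero] at h

lemma apply_orthoPoly_mul_derivative_succ (n : ℕ) :
    L (orthoPoly L n * derivative (orthoPoly L (n + 1))) = (n + 1) * orthoNormSq L n := by
  have hdeg : (derivative (orthoPoly L (n + 1))).degree < n + 1 := by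
    simpa [degree_eq_natDegree (orthoPoly_monic L (n + 1)).ne_zero] using
      degree_derivative_lt (orthoPoly_monic L (n + 1)).ne_zero
  rw [apply_orthoPoly_mul_eq_coeff_mul hL hdeg, coeff_derivative, coeff_orthoPoly_self,
    one_mul]

lemma apply_orthoPoly_succ_mul_derivative (n : ℕ) :
    L (orthoPoly L (n + 1) * derivative (orthoPoly L n)) = 0 := by
  refine apply_orthoPoly_mul_eq_zero hL (degree_derivative_le.trans_lt ?_)
  rw [degree_eq_natDegree (orthoPoly_monic L n).ne_zero, natDegree_orthoPoly]
  exact_mod_cast n.lt_succ_self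

end Orthogonality

section Symmetric

/-- A linear functional on polynomials is symmetric if it vanishes on odd polynomials, as
integration against an even weight does. -/
def IsSymmetricFunctional : Prop := ∀ p : K[X], p.comp (-X) = -p → L p = 0

variable {L} (hsymm : IsSymmetricFunctional L)
include hsymm

lemma jacobiDiag_eq_zero_of_comp_neg_X {n : ℕ}
    (hn : (orthoPoly L n).comp (-X) = (-1) ^ n * orthoPoly L n) : jacobiDiag L n = 0 := by
  have hodd : (X * (orthoPoly L n * orthoPoly L n)).comp (-X) =
      -(X * (orthoPoly L n * orthoPoly L n)) := by
    have hsign : ((-1 : K[X]) ^ n) * (-1) ^ n = 1 := by rw [← mul_pow]; simp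
    simp only [mul_comp, X_comp, hn]
    linear_combination (-X * orthoPoly L n ^ 2) * hsign
  rw [jacobiDiag, hsymm _ hodd, zero_div]

lemma orthoPoly_comp_neg_X (n : ℕ) :
    (orthoPoly L n).comp (-X) = (-1) ^ n * orthoPoly L n := by
  induction n using Nat.twoStepInduction with
  | zero => simp [orthoPoly]
  | one => simp [orthoPoly, hsymm X X_comp]
  | more n hn hn1 =>
    rw [orthoPoly_add_two, jacobiDiag_eq_zero_of_comp_neg_X hsymm hn1, C_0, sub_zero]
    simp only [sub_comp, mul_comp, X_comp, C_comp, hn, hn1]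
    ring

lemma X_mul_orthoPoly_of_isSymmetric (n : ℕ) :
    X * orthoPoly L n =
      orthoPoly L (n + 1) + C (jacobiSubdiag L n) * orthoPoly L (n - 1) := by
  rw [X_mul_orthoPoly, jacobiDiag_eq_zero_of_comp_neg_X hsymm (orthoPoly_comp_neg_X hsymm n)]
  simp

lemma jacobiSubdiag_one : jacobiSubdiag L 1 = L (X ^ 2) / L 1 := by
  simp [jacobiSubdiag, orthoNormSq, orthoPoly, hsymm X X_comp, sq]

lemma X_sq_mul_orthoPoly_succ (n : ℕ) :
    X ^ 2 * orthoPoly L (n + 1) = orthoPoly L (n + 3) +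
      C (jacobiSubdiag L (n + 2) + jacobiSubdiag L (n + 1)) * orthoPoly L (n + 1) +
      C (jacobiSubdiag L (n + 1) * jacobiSubdiag L n) * orthoPoly L (n - 1) := by
  have h0 := X_mul_orthoPoly_of_isSymmetric hsymm n
  have h1 := X_mul_orthoPoly_of_isSymmetric hsymm (n + 1)
  have h2 := X_mul_orthoPoly_of_isSymmetric hsymm (n + 2)
  simp only [Nat.add_sub_cancel, show n + 2 - 1 = n + 1 from rfl] at h1 h2
  simp only [C_add, C_mul]
  linear_combination X * h1 + h2 + C (jacobiSubdiag L (n + 1)) * h0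

variable (hL : ∀ n, orthoNormSq L n ≠ 0)
include hL

lemma apply_X_cube_mul_orthoPoly_mul (n : ℕ) :
    L (X ^ 3 * (orthoPoly L (n + 1) * orthoPoly L n)) = orthoNormSq L (n + 1) *
      (jacobiSubdiag L (n + 2) + jacobiSubdiag L (n + 1) + jacobiSubdiag L n) := by
  set a := jacobiSubdiag L
  have hexpand : X ^ 3 * (orthoPoly L (n + 1) * orthoPoly L n) =
      orthoPoly L (n + 3) * orthoPoly L (n + 1) +
      C (a n) * (orthoPoly L (n + 3) * orthoPoly L (n - 1)) +
      C (a (n + 2) + a (n + 1)) * (orthoPoly L (n + 1) * orthoPoly L (n + 1)) +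
      C ((a (n + 2) + a (n + 1) + a (n + 1)) * a n) * (orthoPoly L (n + 1) * orthoPoly L (n - 1)) +
      C (a (n + 1)) * (C (a n * a n) * (orthoPoly L (n - 1) * orthoPoly L (n - 1))) := by
    rw [show X ^ 3 * (orthoPoly L (n + 1) * orthoPoly L n) =
      (X ^ 2 * orthoPoly L (n + 1)) * (X * orthoPoly L n) by ring, X_sq_mul_orthoPoly_succ hsymm,
      X_mul_orthoPoly_of_isSymmetric hsymm]
    simp only [C_add, C_mul]
    ring
  have hpred : a n * a n * orthoNormSq L (n - 1) = a n * orthoNormSq L n := by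
    cases n with
    | zero => simp [a, jacobiSubdiag]
    | succ n => rw [mul_assoc, Nat.add_sub_cancel, jacobiSubdiag_succ_mul_orthoNormSq hL]
  have hsucc : a (n + 1) * orthoNormSq L n = orthoNormSq L (n + 1) :=
    jacobiSubdiag_succ_mul_orthoNormSq hL n
  rw [hexpand]
  simp only [map_add L, map_C_mul]
  rw [orthoPoly_orthogonal hL (n + 3) (n + 1) (by omega),
    orthoPoly_orthogonal hL (n + 3) (n - 1) (by omega),
    orthoPoly_orthogonal hL (n + 1) (n - 1) (by omega)]
  simp only [orthoNormSq] at hpred hsucc ⊢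
  linear_combination a (n + 1) * hpred + a n * hsucc

theorem natCast_add_one_eq_jacobiSubdiag {c : K}
    (hparts : ∀ p : K[X], L (derivative p) = c * L (X ^ 3 * p)) (n : ℕ) :
    (n + 1 : K) = c * (jacobiSubdiag L (n + 1) *
      (jacobiSubdiag L (n + 2) + jacobiSubdiag L (n + 1) + jacobiSubdiag L n)) := by
  have h := hparts (orthoPoly L (n + 1) * orthoPoly L n)
  rw [derivative_mul, map_add, apply_X_cube_mul_orthoPoly_mul hsymm hL,
    apply_orthoPoly_succ_mul_derivative hL, mul_comm (derivative _),
    apply_orthoPoly_mul_derivative_succ hL, ← jacobiSubdiag_succ_mul_orthoNormSq hL] at h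
  refine mul_right_cancel₀ (hL n) ?_
  linear_combination h

end Symmetric

end OrthogonalPolynomials

/-! ### Integration against a weight -/

section Weight

variable {w : ℝ → ℝ} (hw : ∀ n : ℕ, Integrable fun x => x ^ n * w x)
include hw

lemma integrable_eval_mul (p : ℝ[X]) : Integrable fun x => p.eval x * w x := by
  induction p using Polynomial.induction_on' with
  | add p q hp hq =>
    simp only [eval_add, add_mul]
    exact hp.add hq
  | monomial n a => simpa [mul_assoc] using (hw n).const_mul a

/-- The linear functional `p ↦ ∫ p(x) w(x) dx` on real polynomials, for a weight `w` all of whose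
moments exist. -/
noncomputable def weightFunctional : ℝ[X] →ₗ[ℝ] ℝ where
  toFun p := ∫ x, p.eval x * w x
  map_add' p q := by
    simpa only [eval_add, add_mul] using
      integral_add (integrable_eval_mul hw p) (integrable_eval_mul hw q)
  map_smul' a p := by simp [mul_assoc, integral_const_mul]

lemma weightFunctional_apply (p : ℝ[X]) : weightFunctional hw p = ∫ x, p.eval x * w x := rfl

lemma weightFunctional_mul_self_pos (hcont : Continuous w) (hpos : ∀ x, 0 < w x) {p : ℝ[X]}
    (hp : p ≠ 0) : 0 < weightFunctional hw (p * p) := by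
  obtain ⟨x, hx⟩ : ∃ x, p.eval x ≠ 0 := by
    by_contra! h
    exact hp (Polynomial.funext (by simpa using h))
  rw [weightFunctional_apply]
  refine integral_pos_of_integrable_nonneg_nonzero (x := x) (by fun_prop)
    (integrable_eval_mul hw _) (fun y => ?_) ?_
  · rw [eval_mul]
    exact mul_nonneg (mul_self_nonneg _) (hpos y).le
  · simp [hx, (hpos x).ne']

lemma isSymmetricFunctional_weightFunctional (heven : w.Even) :
    IsSymmetricFunctional (weightFunctional hw) := by
  intro p hp
  have heval : ∀ x, p.eval (-x) = -p.eval x := fun x => by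
    simpa using congr_arg (eval x) hp
  have h := integral_neg_eq_self (fun x => p.eval x * w x) volume
  simp only [heval, heven _, neg_mul, integral_neg] at h
  rw [weightFunctional_apply]
  linarith

lemma weightFunctional_derivative {q : ℝ[X]} (hq : ∀ x, HasDerivAt w (-(q.eval x * w x)) x)
    (p : ℝ[X]) : weightFunctional hw (derivative p) = weightFunctional hw (q * p) := by
  have hderiv : ∀ x, HasDerivAt (fun x => p.eval x * w x)
      ((derivative p - q * p).eval x * w x) x := fun x => by
    refine ((p.hasDerivAt x).mul (hq x)).congr_deriv ?_
    simp only [eval_sub, eval_mul]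
    ring
  have h := integral_eq_zero_of_hasDerivAt_of_integrable hderiv (integrable_eval_mul hw _)
    (integrable_eval_mul hw _)
  rwa [← weightFunctional_apply hw, map_sub, sub_eq_zero] at h

end Weight

/-! ### The quartic weight -/

section ExponentialWeight

variable {b : ℝ} (hb : 0 < b) {m : ℕ} (hm : Even m) (hm0 : m ≠ 0)
include hb hm hm0

lemma integrable_pow_mul_exp_neg_mul_pow (n : ℕ) :
    Integrable fun x : ℝ => x ^ n * exp (-b * x ^ m) := by
  have hm_pos : (0 : ℝ) < m := by exact_mod_cast hm0.bot_lt
  have hn : (-1 : ℝ) < n := by linarith [n.cast_nonneg (α := ℝ)]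
  have hIoi := integrableOn_rpow_mul_exp_neg_mul_rpow hn hm_pos hb
  simp only [rpow_natCast] at hIoi
  have habs : Integrable fun x : ℝ => ‖x‖ ^ n * exp (-b * ‖x‖ ^ m) :=
    (integrable_fun_norm_addHaar volume (f := fun r => r ^ n * exp (-b * r ^ m))).2
      (by simpa using hIoi)
  refine habs.mono' (by fun_prop) (.of_forall fun x => ?_)
  simp [hm.pow_abs]

lemma integral_pow_mul_exp_neg_mul_pow {k : ℕ} (hk : Even k) :
    ∫ x : ℝ, x ^ k * exp (-b * x ^ m) =
      2 * (b ^ (-(k + 1) / m : ℝ) * (1 / m) * Gamma ((k + 1) / m)) := by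
  have hm_pos : (0 : ℝ) < m := by exact_mod_cast hm0.bot_lt
  have hk' : (-1 : ℝ) < k := by linarith [k.cast_nonneg (α := ℝ)]
  have hIoi := integral_rpow_mul_exp_neg_mul_rpow hm_pos hk' hb
  simp only [rpow_natCast] at hIoi
  have habs := integral_comp_abs (f := fun x : ℝ => x ^ k * exp (-b * x ^ m))
  simp only [hk.pow_abs, hm.pow_abs] at habs
  rw [habs, hIoi]

end ExponentialWeight

section QuarticWeight

variable {b : ℝ} (hb : 0 < b)

/-- Integration against the weight `exp (-b * x ^ 4)`. -/
noncomputable def quarticFunctional : ℝ[X] →ₗ[ℝ] ℝ :=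
  weightFunctional (integrable_pow_mul_exp_neg_mul_pow hb (m := 4) (by decide) (by decide))

lemma quarticFunctional_mul_self_pos {p : ℝ[X]} (hp : p ≠ 0) :
    0 < quarticFunctional hb (p * p) :=
  weightFunctional_mul_self_pos _ (by fun_prop) (fun _ => exp_pos _) hp

lemma isSymmetricFunctional_quarticFunctional : IsSymmetricFunctional (quarticFunctional hb) :=
  isSymmetricFunctional_weightFunctional _ fun x => by simp [(by decide : Even 4).neg_pow]

lemma quarticFunctional_derivative (p : ℝ[X]) :
    quarticFunctional hb (derivative p) = 4 * b * quarticFunctional hb (X ^ 3 * p) := by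
  have hderiv : ∀ x, HasDerivAt (fun x : ℝ => exp (-b * x ^ 4))
      (-((C (4 * b) * X ^ 3 : ℝ[X]).eval x * exp (-b * x ^ 4))) x := fun x => by
    refine ((hasDerivAt_pow 4 x).const_mul (-b)).exp.congr_deriv ?_
    simp only [eval_mul, eval_C, eval_pow, eval_X]
    push_cast
    ring
  rw [quarticFunctional, weightFunctional_derivative _ hderiv, mul_assoc, map_C_mul]

lemma quarticFunctional_X_pow {k : ℕ} (hk : Even k) :
    quarticFunctional hb (X ^ k) =
      2 * (b ^ (-(k + 1) / 4 : ℝ) * (1 / 4) * Gamma ((k + 1) / 4)) := by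
  simpa [quarticFunctional, weightFunctional_apply] using
    integral_pow_mul_exp_neg_mul_pow hb (m := 4) (by decide) (by decide) hk

lemma orthoNormSq_quarticFunctional_pos (n : ℕ) : 0 < orthoNormSq (quarticFunctional hb) n :=
  quarticFunctional_mul_self_pos hb (orthoPoly_monic _ n).ne_zero

theorem isPositiveSolution_jacobiSubdiag_quarticFunctional :
    IsPositiveSolution (fun n => n / (4 * b)) (jacobiSubdiag (quarticFunctional hb)) where
  zero := rfl
  eq n := by
    have h := natCast_add_one_eq_jacobiSubdiag (isSymmetricFunctional_quarticFunctional hb)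
      (fun n => (orthoNormSq_quarticFunctional_pos hb n).ne') (quarticFunctional_derivative hb) n
    rw [div_eq_iff (by positivity)]
    push_cast
    linear_combination h
  pos n := div_pos (orthoNormSq_quarticFunctional_pos hb _) (orthoNormSq_quarticFunctional_pos hb _)

theorem jacobiSubdiag_quarticFunctional_one :
    jacobiSubdiag (quarticFunctional hb) 1 = Gamma (3 / 4) / (√b * Gamma (1 / 4)) := by
  have hX2 : quarticFunctional hb (X ^ 2) =
      2 * (b ^ (-(3 / 4) : ℝ) * (1 / 4) * Gamma (3 / 4)) := by
    rw [quarticFunctional_X_pow hb even_two]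
    norm_num
  have hX0 : quarticFunctional hb 1 = 2 * (b ^ (-(1 / 4) : ℝ) * (1 / 4) * Gamma (1 / 4)) := by
    rw [← pow_zero X, quarticFunctional_X_pow hb Even.zero]
    norm_num
  have hexp : b ^ (-(1 / 4) : ℝ) = b ^ (-(3 / 4) : ℝ) * √b := by
    rw [sqrt_eq_rpow, ← rpow_add hb]
    norm_num
  have hΓ : Gamma (1 / 4) ≠ 0 := (Gamma_pos_of_pos (by norm_num)).ne'
  rw [jacobiSubdiag_one (isSymmetricFunctional_quarticFunctional hb), hX2, hX0, hexp]
  have hpow : b ^ (-(3 / 4) : ℝ) ≠ 0 := (rpow_pos_of_pos hb _).ne'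
  field_simp

end QuarticWeight

/-- The difference equation `n = xₙ (xₙ₊₁ + xₙ + xₙ₋₁)` with `x₀ = 0` has exactly one
positive solution, and this solution has `x₁ = 2 Γ(3/4)/Γ(1/4)`. -/
theorem stmt0 :
    (∃! x : ℕ → ℝ,
      x 0 = 0 ∧
      (∀ n : ℕ, 1 ≤ n → (n : ℝ) = x n * (x (n + 1) + x n + x (n - 1))) ∧
      (∀ n : ℕ, 1 ≤ n → 0 < x n)) ∧
    (∀ x : ℕ → ℝ,
      x 0 = 0 →
      (∀ n : ℕ, 1 ≤ n → (n : ℝ) = x n * (x (n + 1) + x n + x (n - 1))) →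
      (∀ n : ℕ, 1 ≤ n → 0 < x n) →
      x 1 = 2 * Real.Gamma (3 / 4) / Real.Gamma (1 / 4)) := by
  have hb : (0 : ℝ) < 1 / 4 := by norm_num
  have hsol : IsPositiveSolution (fun n => (n : ℝ)) (jacobiSubdiag (quarticFunctional hb)) := by
    simpa using isPositiveSolution_jacobiSubdiag_quarticFunctional hb
  have hone : jacobiSubdiag (quarticFunctional hb) 1 = 2 * Gamma (3 / 4) / Gamma (1 / 4) := by
    rw [jacobiSubdiag_quarticFunctional_one,
      show √(1 / 4 : ℝ) = 1 / 2 by rw [sqrt_eq_iff_mul_self_eq] <;> norm_num]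
    ring
  have hgrowth : (fun n : ℕ => (n : ℝ)) =o[atTop] fun n => (n : ℝ) ^ 2 := by
    simpa [Function.comp_def] using (isLittleO_pow_pow_atTop_of_lt one_lt_two).comp_tendsto
      (tendsto_natCast_atTop_atTop (R := ℝ))
  refine ⟨⟨_, isPositiveSolution_iff.1 hsol,
    fun y hy => (isPositiveSolution_iff.2 hy).unique hsol hgrowth⟩, fun x h0 heq hpos => ?_⟩
  rw [(isPositiveSolution_iff.2 ⟨h0, heq, hpos⟩).unique hsol hgrowth, hone]
end

section
/- Suppose ℓ_n > 0, σ_{n,0} > 0, σ_{n,1} > 0, σ_{n,-1} > 0 and κ_n ∈ ℝ for every n ≥ 1. Then for every x_0 ∈ ℝ there exists at least one x_1 > 0 such that the sequence (x_n)_{n≥0} determined by x_0, x_1 and the equation ℓ_n = x_n (σ_{n,1} x_{n+1} + σ_{n,0} x_n + σ_{n,-1} x_{n-1}) + κ_n x_n for all n ≥ 1 satisfies x_n > 0 for all n ≥ 1. -/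
/-!
The equation determines `x (n + 2)` from `u = x n` and `v = x (n + 1)`: it tends to `+∞` as
`v → 0⁺` and to `-∞` as `v → +∞`, uniformly for bounded `u`. Hence one can choose intervals
`[a n, b n]`, positive for `n ≥ 1`, so that whenever `u ∈ [a n, b n]` the next term is at least
`b (n + 2)` for `v = a (n + 1)` and nonpositive for `v = b (n + 1)`. The upper ends are chosen
first, as `b (n + 1)` depends only on `b n`, while `a (n + 1)` depends on `b n` and `b (n + 2)`.

Now regard all terms as functions of `t = x 1`. If `x (n + 1)` runs from `a (n + 1)` to `b (n + 1)`
along an interval of parameters, then `x (n + 2)` covers `[a (n + 2), b (n + 2)]` there, and it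
runs from one end to the other along a subinterval. A parameter common to all these nested compact
intervals is an admissible `x 1`.
-/

open Set Filter Topology

lemma exists_uIcc_subset_mapsTo_Icc {α : Type*} [LinearOrder α] [TopologicalSpace α]
    [OrderClosedTopology α] {f : ℝ → α} {p q : ℝ} {c d : α} (hf : ContinuousOn f (uIcc p q))
    (hcd : c ≤ d) (hp : f p ≤ c) (hq : d ≤ f q) :
    ∃ p' q', uIcc p' q' ⊆ uIcc p q ∧ MapsTo f (uIcc p' q') (Icc c d) ∧ f p' = c ∧ f q' = d := by
  -- Take `p'` and `q'` as close together as possible subject to `f p' ≤ c` and `d ≤ f q'`.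
  have hcompact : IsCompact ((uIcc p q ∩ f ⁻¹' Iic c) ×ˢ (uIcc p q ∩ f ⁻¹' Ici d)) :=
    (isCompact_uIcc.of_isClosed_subset
      (hf.preimage_isClosed_of_isClosed isClosed_Icc isClosed_Iic) inter_subset_left).prod
    (isCompact_uIcc.of_isClosed_subset
      (hf.preimage_isClosed_of_isClosed isClosed_Icc isClosed_Ici) inter_subset_left)
  obtain ⟨⟨p', q'⟩, ⟨⟨hp', hfp'⟩, hq', hfq'⟩, hmin⟩ := hcompact.exists_isMinOn
    ⟨(p, q), ⟨left_mem_uIcc, hp⟩, right_mem_uIcc, hq⟩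
    (continuous_dist : Continuous fun z : ℝ × ℝ => dist z.1 z.2).continuousOn
  have hsub : uIcc p' q' ⊆ uIcc p q := uIcc_subset_uIcc hp' hq'
  have dist_le : ∀ z ∈ uIcc p' q', ∀ w ∈ uIcc p' q', f z ≤ c → d ≤ f w →
      dist p' q' ≤ dist z w :=
    fun z hz w hw hzc hwd => isMinOn_iff.1 hmin (z, w) ⟨⟨hsub hz, hzc⟩, hsub hw, hwd⟩
  have dist_add : ∀ z ∈ uIcc p' q', dist p' z + dist z q' = dist p' q' :=
    fun z hz => dist_add_dist_of_mem_segment (segment_eq_uIcc p' q' ▸ hz)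
  have eq_left : ∀ z ∈ uIcc p' q', f z ≤ c → z = p' := fun z hz hzc => by
    have := dist_le z hz q' right_mem_uIcc hzc hfq'
    exact (dist_le_zero.1 (by linarith [dist_add z hz])).symm
  have eq_right : ∀ z ∈ uIcc p' q', d ≤ f z → z = q' := fun z hz hzd => by
    have := dist_le p' left_mem_uIcc z hz hfp' hzd
    exact dist_le_zero.1 (by linarith [dist_add z hz])
  have hivt : Icc c d ⊆ f '' uIcc p' q' :=
    (Icc_subset_Icc hfp' hfq').trans
      (Icc_subset_uIcc.trans (intermediate_value_uIcc (hf.mono hsub)))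
  have hfp'_eq : f p' = c := by
    obtain ⟨z, hz, hzc⟩ := hivt (left_mem_Icc.2 hcd)
    rw [← eq_left z hz hzc.le, hzc]
  have hfq'_eq : f q' = d := by
    obtain ⟨z, hz, hzd⟩ := hivt (right_mem_Icc.2 hcd)
    rw [← eq_right z hz hzd.ge, hzd]
  refine ⟨p', q', hsub, fun z hz => ⟨?_, ?_⟩, hfp'_eq, hfq'_eq⟩
  · by_contra! hzc
    exact hzc.ne (eq_left z hz hzc.le ▸ hfp'_eq)
  · by_contra! hzd
    exact hzd.ne' (eq_right z hz hzd.le ▸ hfq'_eq)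

/-- The `n`-th term of the solution of `x (n + 2) = F n (x n) (x (n + 1))` starting with `x₀, t`,
as a function of the shooting parameter `t`. -/
def shoot (F : ℕ → ℝ → ℝ → ℝ) (x₀ : ℝ) : ℕ → ℝ → ℝ
  | 0, _ => x₀
  | 1, t => t
  | n + 2, t => F n (shoot F x₀ n t) (shoot F x₀ (n + 1) t)

/-- The interval with end points `I.1` and `I.2` is one of the nested parameter intervals of the
shooting argument: terms `n` and `n + 1` stay in `[a n, b n]` and `[a (n + 1), b (n + 1)]`, and
term `n + 1` crosses its interval. The end points are not ordered, since the orientation of the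
crossing alternates. -/
structure IsCrossing (F : ℕ → ℝ → ℝ → ℝ) (x₀ : ℝ) (a b : ℕ → ℝ) (n : ℕ) (I : ℝ × ℝ) : Prop where
  continuousOn : ContinuousOn (shoot F x₀ n) (uIcc I.1 I.2)
  continuousOn_succ : ContinuousOn (shoot F x₀ (n + 1)) (uIcc I.1 I.2)
  mapsTo : MapsTo (shoot F x₀ n) (uIcc I.1 I.2) (Icc (a n) (b n))
  mapsTo_succ : MapsTo (shoot F x₀ (n + 1)) (uIcc I.1 I.2) (Icc (a (n + 1)) (b (n + 1)))
  left : shoot F x₀ (n + 1) I.1 = a (n + 1)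
  right : shoot F x₀ (n + 1) I.2 = b (n + 1)

section Shooting

variable {F : ℕ → ℝ → ℝ → ℝ} {x₀ : ℝ} {a b : ℕ → ℝ}

lemma isCrossing_zero (hx₀ : x₀ ∈ Icc (a 0) (b 0)) (hab : a 1 ≤ b 1) :
    IsCrossing F x₀ a b 0 (a 1, b 1) where
  continuousOn := continuousOn_const
  continuousOn_succ := continuousOn_id
  mapsTo _ _ := hx₀
  mapsTo_succ _ ht := uIcc_of_le hab ▸ ht
  left := rfl
  right := rfl

lemma IsCrossing.exists_succ {n : ℕ} {I : ℝ × ℝ} (hI : IsCrossing F x₀ a b n I)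
    (hab : a (n + 2) ≤ b (n + 2))
    (hF : ContinuousOn (F n).uncurry (Icc (a n) (b n) ×ˢ Icc (a (n + 1)) (b (n + 1))))
    (hleft : ∀ u ∈ Icc (a n) (b n), b (n + 2) ≤ F n u (a (n + 1)))
    (hright : ∀ u ∈ Icc (a n) (b n), F n u (b (n + 1)) ≤ a (n + 2)) :
    ∃ J : ℝ × ℝ, uIcc J.1 J.2 ⊆ uIcc I.1 I.2 ∧ IsCrossing F x₀ a b (n + 1) J := by
  have hcont : ContinuousOn (shoot F x₀ (n + 2)) (uIcc I.1 I.2) :=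
    hF.comp (hI.continuousOn.prodMk hI.continuousOn_succ)
      fun t ht => ⟨hI.mapsTo ht, hI.mapsTo_succ ht⟩
  have hI₁ : b (n + 2) ≤ shoot F x₀ (n + 2) I.1 := by
    rw [shoot, hI.left]
    exact hleft _ (hI.mapsTo left_mem_uIcc)
  have hI₂ : shoot F x₀ (n + 2) I.2 ≤ a (n + 2) := by
    rw [shoot, hI.right]
    exact hright _ (hI.mapsTo right_mem_uIcc)
  obtain ⟨p, q, hsub, hmaps, hp, hq⟩ :=
    exists_uIcc_subset_mapsTo_Icc (uIcc_comm I.1 I.2 ▸ hcont) hab hI₂ hI₁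
  rw [uIcc_comm I.2] at hsub
  exact ⟨(p, q), hsub, hI.continuousOn_succ.mono hsub, hcont.mono hsub,
    hI.mapsTo_succ.mono_left hsub, hmaps, hp, hq⟩

theorem exists_solution_mem_Icc (hx₀ : x₀ ∈ Icc (a 0) (b 0)) (hab : ∀ n, a (n + 1) ≤ b (n + 1))
    (hF : ∀ n, ContinuousOn (F n).uncurry (Icc (a n) (b n) ×ˢ Icc (a (n + 1)) (b (n + 1))))
    (hleft : ∀ n, ∀ u ∈ Icc (a n) (b n), b (n + 2) ≤ F n u (a (n + 1)))
    (hright : ∀ n, ∀ u ∈ Icc (a n) (b n), F n u (b (n + 1)) ≤ a (n + 2)) :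
    ∃ x : ℕ → ℝ, x 0 = x₀ ∧ (∀ n, x (n + 2) = F n (x n) (x (n + 1))) ∧
      ∀ n, x n ∈ Icc (a n) (b n) := by
  have hstep : ∀ n I, IsCrossing F x₀ a b n I →
      ∃ J : ℝ × ℝ, uIcc J.1 J.2 ⊆ uIcc I.1 I.2 ∧ IsCrossing F x₀ a b (n + 1) J :=
    fun n I hI => hI.exists_succ (hab (n + 1)) (hF n) (hleft n) (hright n)
  choose! next hsub hnext using hstep
  let J : ℕ → ℝ × ℝ := fun n => Nat.rec (a 1, b 1) next n
  have hJ : ∀ n, IsCrossing F x₀ a b n (J n) := fun n =>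
    Nat.rec (isCrossing_zero hx₀ (hab 0)) (fun n ih => hnext n (J n) ih) n
  obtain ⟨t, ht⟩ := IsCompact.nonempty_iInter_of_sequence_nonempty_isCompact_isClosed
    (fun n => uIcc (J n).1 (J n).2) (fun n => hsub n _ (hJ n)) (fun _ => nonempty_uIcc)
    isCompact_uIcc (fun _ => isClosed_Icc)
  exact ⟨fun n => shoot F x₀ n t, rfl, fun _ => rfl, fun n => (hJ n).mapsTo (mem_iInter.1 ht n)⟩

lemma exists_barriers (x₀ : ℝ)
    (hzero : ∀ n M K, ∀ᶠ v in 𝓝[>] 0, ∀ u ∈ Icc (-M) M, K ≤ F n u v)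
    (htop : ∀ n M, ∀ᶠ v in atTop, ∀ u ∈ Icc (-M) M, F n u v ≤ 0) :
    ∃ a b : ℕ → ℝ, x₀ ∈ Icc (a 0) (b 0) ∧ (∀ n, 0 < a (n + 1)) ∧ (∀ n, a (n + 1) ≤ b (n + 1)) ∧
      (∀ n, ∀ u ∈ Icc (a n) (b n), b (n + 2) ≤ F n u (a (n + 1))) ∧
      ∀ n, ∀ u ∈ Icc (a n) (b n), F n u (b (n + 1)) ≤ 0 := by
  choose β hβ_pos hβ using fun n M => ((eventually_gt_atTop 0).and (htop n M)).exists
  let b : ℕ → ℝ := fun n => Nat.rec |x₀| β n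
  have hb_pos : ∀ n, 0 < b (n + 1) := fun n => hβ_pos n (b n)
  have hIoc (n : ℕ) : ∀ᶠ v in 𝓝[>] 0, v ∈ Ioc 0 (b (n + 1)) := Ioc_mem_nhdsGT (hb_pos n)
  choose α hα_mem hα using fun n => ((hIoc n).and (hzero n (b n) (b (n + 2)))).exists
  let a : ℕ → ℝ := fun n => Nat.casesOn n (-|x₀|) α
  have hsub : ∀ n, Icc (a n) (b n) ⊆ Icc (-b n) (b n)
    | 0 => Subset.rfl
    | n + 1 => Icc_subset_Icc_left ((neg_neg_of_pos (hb_pos n)).le.trans (hα_mem n).1.le)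
  exact ⟨a, b, abs_le.1 le_rfl, fun n => (hα_mem n).1, fun n => (hα_mem n).2,
    fun n u hu => hα n u (hsub n hu), fun n u hu => hβ n (b n) u (hsub n hu)⟩

theorem exists_pos_solution (x₀ : ℝ) (hF : ∀ n, ContinuousOn (F n).uncurry (univ ×ˢ Ioi 0))
    (hzero : ∀ n M K, ∀ᶠ v in 𝓝[>] 0, ∀ u ∈ Icc (-M) M, K ≤ F n u v)
    (htop : ∀ n M, ∀ᶠ v in atTop, ∀ u ∈ Icc (-M) M, F n u v ≤ 0) :
    ∃ x : ℕ → ℝ, x 0 = x₀ ∧ (∀ n, x (n + 2) = F n (x n) (x (n + 1))) ∧ ∀ n, 0 < x (n + 1) := by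
  obtain ⟨a, b, hx₀, ha, hab, hleft, hright⟩ := exists_barriers x₀ hzero htop
  obtain ⟨x, hx_zero, hx_rec, hx_mem⟩ := exists_solution_mem_Icc hx₀ hab
    (fun n => (hF n).mono (prod_mono (subset_univ _) fun _ hv => (ha n).trans_le hv.1)) hleft
    fun n u hu => (hright n u hu).trans (ha (n + 1)).le
  exact ⟨x, hx_zero, hx_rec, fun n => (ha n).trans_le (hx_mem (n + 1)).1⟩

end Shooting

/-- The term following `u, v` in a solution of the difference equation with coefficients
`ℓ = l`, `σ₁ = s₁`, `σ₀ = s₀`, `σ₋₁ = sm`, `κ = k`, to be used for `v ≠ 0` and `s₁ ≠ 0` only. -/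
noncomputable def nextTerm (l s₁ s₀ sm k u v : ℝ) : ℝ :=
  (l / v - s₀ * v - sm * u - k) / s₁

section NextTerm

variable {l s₁ s₀ sm k : ℝ}

lemma eq_mul_nextTerm_add {u v : ℝ} (hs₁ : s₁ ≠ 0) (hv : v ≠ 0) :
    l = v * (s₁ * nextTerm l s₁ s₀ sm k u v + s₀ * v + sm * u) + k * v := by
  unfold nextTerm
  field_simp
  ring

lemma continuousOn_nextTerm :
    ContinuousOn (nextTerm l s₁ s₀ sm k).uncurry (univ ×ˢ Ioi 0) := by
  have hdiv : ContinuousOn (fun z : ℝ × ℝ => l / z.2) (univ ×ˢ Ioi 0) :=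
    continuousOn_const.div continuousOn_snd fun z hz => (mem_Ioi.1 hz.2).ne'
  unfold nextTerm Function.uncurry
  fun_prop

lemma eventually_le_nextTerm {g : Filter ℝ} (hs₁ : 0 < s₁)
    (hg : Tendsto (fun v => l / v - s₀ * v) g atTop) (M K : ℝ) :
    ∀ᶠ v in g, ∀ u ∈ Icc (-M) M, K ≤ nextTerm l s₁ s₀ sm k u v := by
  filter_upwards [hg.eventually_ge_atTop (K * s₁ + |sm| * M + k)] with v hv u hu
  have hsmu : sm * u ≤ |sm| * M := by
    grw [le_abs_self (sm * u), abs_mul, abs_le.2 hu]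
  rw [nextTerm, le_div_iff₀ hs₁]
  linarith

lemma eventually_nextTerm_le {g : Filter ℝ} (hs₁ : 0 < s₁)
    (hg : Tendsto (fun v => l / v - s₀ * v) g atBot) (M K : ℝ) :
    ∀ᶠ v in g, ∀ u ∈ Icc (-M) M, nextTerm l s₁ s₀ sm k u v ≤ K := by
  filter_upwards [hg.eventually_le_atBot (K * s₁ - |sm| * M + k)] with v hv u hu
  have hsmu : -(|sm| * M) ≤ sm * u := by
    grw [← neg_abs_le (sm * u), abs_mul, abs_le.2 hu]
  rw [nextTerm, div_le_iff₀ hs₁]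
  linarith

lemma tendsto_div_sub_mul_nhdsGT_zero (hl : 0 < l) :
    Tendsto (fun v => l / v - s₀ * v) (𝓝[>] 0) atTop := by
  have hmul : Tendsto (fun v => -(s₀ * v)) (𝓝[>] 0) (𝓝 (-(s₀ * 0))) :=
    (Continuous.tendsto (by fun_prop) 0).mono_left nhdsWithin_le_nhds
  simpa only [div_eq_mul_inv, sub_eq_add_neg] using
    (tendsto_inv_nhdsGT_zero.const_mul_atTop hl).atTop_add hmul

lemma tendsto_div_sub_mul_atTop (hs₀ : 0 < s₀) :
    Tendsto (fun v => l / v - s₀ * v) atTop atBot := by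
  simpa only [sub_eq_add_neg, Function.comp_def, id_eq] using
    (tendsto_const_nhds.div_atTop tendsto_id).add_atBot
      (tendsto_neg_atTop_atBot.comp (tendsto_id.const_mul_atTop hs₀))

end NextTerm

theorem stmt2_general (ℓ σ1 σ0 σm1 κ : ℕ → ℝ)
    (hℓ : ∀ n : ℕ, 1 ≤ n → 0 < ℓ n)
    (hσ0 : ∀ n : ℕ, 1 ≤ n → 0 < σ0 n)
    (hσ1 : ∀ n : ℕ, 1 ≤ n → 0 < σ1 n)
    (x₀ : ℝ) :
    ∃ x : ℕ → ℝ, x 0 = x₀ ∧ 0 < x 1 ∧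
      (∀ n : ℕ, 1 ≤ n →
        ℓ n = x n * (σ1 n * x (n + 1) + σ0 n * x n + σm1 n * x (n - 1)) + κ n * x n) ∧
      (∀ n : ℕ, 1 ≤ n → 0 < x n) := by
  let F (n : ℕ) : ℝ → ℝ → ℝ :=
    nextTerm (ℓ (n + 1)) (σ1 (n + 1)) (σ0 (n + 1)) (σm1 (n + 1)) (κ (n + 1))
  have hσ1' (n : ℕ) : 0 < σ1 (n + 1) := hσ1 _ n.succ_pos
  have hzero (n : ℕ) (M K : ℝ) : ∀ᶠ v in 𝓝[>] 0, ∀ u ∈ Icc (-M) M, K ≤ F n u v :=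
    eventually_le_nextTerm (hσ1' n) (tendsto_div_sub_mul_nhdsGT_zero (hℓ _ n.succ_pos)) M K
  have htop (n : ℕ) (M : ℝ) : ∀ᶠ v in atTop, ∀ u ∈ Icc (-M) M, F n u v ≤ 0 :=
    eventually_nextTerm_le (hσ1' n) (tendsto_div_sub_mul_atTop (hσ0 _ n.succ_pos)) M 0
  obtain ⟨x, hx_zero, hx_rec, hx_pos⟩ :=
    exists_pos_solution x₀ (fun _ => continuousOn_nextTerm) hzero htop
  refine ⟨x, hx_zero, hx_pos 0, fun n hn => ?_, fun n hn => ?_⟩ <;>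
    obtain ⟨m, rfl⟩ := Nat.exists_eq_add_of_le' hn
  · rw [hx_rec m]
    exact eq_mul_nextTerm_add (hσ1' m).ne' (hx_pos m).ne'
  · exact hx_pos m

/-- Existence: if all coefficients `ℓₙ, σₙ₀, σₙ₁, σₙ₋₁` are positive, then for every
`x₀ ∈ ℝ` there is at least one `x₁ > 0` such that the sequence determined by the equation
`ℓₙ = xₙ (σₙ₁ xₙ₊₁ + σₙ₀ xₙ + σₙ₋₁ xₙ₋₁) + κₙ xₙ` is positive. -/
theorem stmt2 (ℓ σ1 σ0 σm1 κ : ℕ → ℝ)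
    (hℓ : ∀ n : ℕ, 1 ≤ n → 0 < ℓ n)
    (hσ0 : ∀ n : ℕ, 1 ≤ n → 0 < σ0 n)
    (hσ1 : ∀ n : ℕ, 1 ≤ n → 0 < σ1 n)
    (hσm1 : ∀ n : ℕ, 1 ≤ n → 0 < σm1 n)
    (x₀ : ℝ) :
    ∃ x : ℕ → ℝ, x 0 = x₀ ∧ 0 < x 1 ∧
      (∀ n : ℕ, 1 ≤ n →
        ℓ n = x n * (σ1 n * x (n + 1) + σ0 n * x n + σm1 n * x (n - 1)) + κ n * x n) ∧
      (∀ n : ℕ, 1 ≤ n → 0 < x n) :=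
  stmt2_general ℓ σ1 σ0 σm1 κ hℓ hσ0 hσ1 x₀
end

section
/- Suppose ℓ_n > 0, σ_{n,0} > 0, σ_{n,1} ≥ 0, σ_{n,-1} ≥ 0 and κ_n ∈ ℝ for all n ≥ 1, set σ_n := max(σ_{n,-1}, σ_{n,1}), and assume: (i) liminf_{n→∞} (1/n²)(ℓ_n/σ_{n,0} + (κ_n⁻)²/σ_{n,0}²) = 0, where κ_n⁻ := (|κ_n| − κ_n)/2; (ii) for every n ≥ 1 either (★) 2σ_n ≤ σ_{n,0}, or (✧) σ_n ≤ σ_{n,0} < 2σ_n together with −2(σ_{n,0} − σ_n)√ℓ_n ≤ κ_n √(2σ_n − σ_{n,0}); (iii) x_0 ∈ ℝ is arbitrary if n = 1 satisfies (★), while if n = 1 satisfies (✧) then additionally −2(σ_{1,0} − σ_1)√ℓ_1 ≤ (σ_{1,-1} x_0 + κ_1)√(2σ_1 − σ_{1,0}). Then there exists a unique x* > 0 such that every sequence (x_n)_{n≥0} starting from x_0 that satisfies ℓ_n = x_n (σ_{n,1} x_{n+1} + σ_{n,0} x_n + σ_{n,-1} x_{n-1}) + κ_n x_n for all n ≥ 1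 and has x_n > 0 for all n ≥ 1 must have x_1 = x*; in particular the equation has at most one positive solution. -/
/-!
For fixed neighbours the equation reads `xₙ (σₙ₀ xₙ + c) = ℓₙ`, whose unique positive root is
antitone in `c = σₙ₁ xₙ₊₁ + σₙ₋₁ xₙ₋₁ + κₙ`. Positive solutions are therefore the fixed points of
an antitone operator `T` on sequences, and `T ∘ T` has a fixed point by Knaster–Tarski.

The key is a rigidity property: `|u - v| ≤ |T u - T v|` implies `T u = T v`. Put `x = T u`,
`y = T v` and `d = |x - y|`. Subtracting the equations of `x` and `y` gives
`(ℓₙ + σₙ₀ xₙ yₙ) dₙ ≤ xₙ yₙ σₙ (dₙ₊₁ + dₙ₋₁)`, and (★) or (✧) gives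
`2 σₙ xₙ yₙ ≤ ℓₙ + σₙ₀ xₙ yₙ`. Hence `d` is convex with `d₀ = 0`, so `dₙ / n` is nondecreasing,
while `dₙ² ≤ 2 (ℓₙ / σₙ₀ + (κₙ⁻)² / σₙ₀²)` for `n ≥ 2`; the liminf condition then forces `d = 0`.

Rigidity with `u = g = T (T g)`, `v = T g` turns the fixed point of `T ∘ T` into one of `T`, and
with two fixed points of `T` it shows that they coincide.
-/

open Filter

section OrderedField

variable {K : Type*} [Field K] [LinearOrder K] [IsStrictOrderedRing K]

lemma le_of_mul_add_le_mul_add {s c c' x y : K} (hs : 0 ≤ s) (hx : 0 < x)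
    (hpos : 0 < x * (s * x + c)) (hc : c ≤ c') (h : y * (s * y + c') ≤ x * (s * x + c)) :
    y ≤ x := by
  by_contra! hxy
  have hfactor : 0 < s * x + c := pos_of_mul_pos_right hpos hx.le
  have hfactor_le : s * x + c ≤ s * y + c' := by gcongr
  exact h.not_gt (mul_lt_mul hxy hfactor_le hfactor (hx.trans hxy).le)

lemma two_mul_abs_sub_le_of_mul_add_eq {s l c c' x y M D : K} (hl : 0 < l)
    (hs : 0 ≤ s) (hx : 0 < x) (hy : 0 < y) (hxc : x * (s * x + c) = l)
    (hyc : y * (s * y + c') = l) (hM : 2 * M * (x * y) ≤ l + s * (x * y)) (hD : 0 ≤ D)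
    (hc : |c - c'| ≤ M * D) : 2 * |x - y| ≤ D := by
  have hpos : 0 < l + s * (x * y) := by positivity
  have hsub : (l + s * (x * y)) * (x - y) = -(x * y * (c - c')) := by
    linear_combination y * hxc - x * hyc
  have habs : (l + s * (x * y)) * |x - y| = x * y * |c - c'| := by
    simpa only [abs_mul, abs_neg, abs_of_pos hpos, abs_of_pos hx, abs_of_pos hy]
      using congrArg abs hsub
  refine le_of_mul_le_mul_left ?_ hpos
  calc (l + s * (x * y)) * (2 * |x - y|)
      = 2 * (x * y * |c - c'|) := by rw [← habs]; ring
    _ ≤ 2 * (x * y * (M * D)) := by gcongr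
    _ = 2 * M * (x * y) * D := by ring
    _ ≤ (l + s * (x * y)) * D := by gcongr

lemma sq_le_of_mul_add_le {s l k x : K} (hs : 0 < s) (hx : 0 ≤ x) (h : x * (s * x + k) ≤ l) :
    x ^ 2 ≤ 2 * (l / s + ((|k| - k) / 2) ^ 2 / s ^ 2) := by
  have hk : -k ≤ (|k| - k) / 2 := by linarith [neg_abs_le k]
  set m := (|k| - k) / 2
  have hquad : x ^ 2 ≤ l / s + m / s * x := by
    have : s * x ^ 2 ≤ l + m * x := by linarith [mul_le_mul_of_nonneg_right hk hx]
    rw [div_mul_eq_mul_div, ← add_div, le_div_iff₀' hs]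
    exact this
  have hamgm : 2 * (m / s * x) ≤ (m / s) ^ 2 + x ^ 2 := by linarith [two_mul_le_add_sq (m / s) x]
  rw [← div_pow]
  linarith [sq_nonneg (m / s)]

lemma add_one_mul_le_mul_succ_of_convex {d : ℕ → K} (h0 : d 0 ≤ 0)
    (hd : ∀ n, 1 ≤ n → 2 * d n ≤ d (n + 1) + d (n - 1)) (n : ℕ) :
    (n + 1) * d n ≤ n * d (n + 1) := by
  induction n with
  | zero => simpa using h0
  | succ n ih =>
    have hconv : (n + 1 : K) * (2 * d (n + 1)) ≤ (n + 1) * (d (n + 2) + d n) := by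
      gcongr
      exact hd (n + 1) n.succ_pos
    push_cast
    linarith

lemma monotoneOn_div_of_convex {d : ℕ → K} (h0 : d 0 ≤ 0)
    (hd : ∀ n, 1 ≤ n → 2 * d n ≤ d (n + 1) + d (n - 1)) :
    MonotoneOn (fun n ↦ d n / n) {n : ℕ | 1 ≤ n} := by
  refine monotoneOn_nat_Ici_of_le_succ fun n hn ↦ ?_
  have hn0 : (0 : K) < n := Nat.cast_pos.2 hn
  rw [div_le_div_iff₀ hn0 (by positivity)]
  push_cast
  linarith [add_one_mul_le_mul_succ_of_convex h0 hd n]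

lemma nonpos_of_convex_of_frequently_lt {d : ℕ → K} (h0 : d 0 ≤ 0)
    (hd : ∀ n, 1 ≤ n → 2 * d n ≤ d (n + 1) + d (n - 1))
    (hfreq : ∀ ε > 0, ∃ᶠ n : ℕ in atTop, d n < ε * n) (k : ℕ) : d k ≤ 0 := by
  rcases k.eq_zero_or_pos with rfl | hk
  · exact h0
  by_contra! hdk
  have hk0 : (0 : K) < k := Nat.cast_pos.2 hk
  obtain ⟨n, hn, hkn⟩ := ((hfreq _ (div_pos hdk hk0)).and_eventually (eventually_ge_atTop k)).exists
  have hn0 : (0 : K) < n := Nat.cast_pos.2 (hk.trans_le hkn)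
  have hmono : d k / k ≤ d n / n := monotoneOn_div_of_convex h0 hd hk (hk.trans_le hkn) hkn
  exact hmono.not_gt ((div_lt_iff₀ hn0).2 hn)

end OrderedField

section PosRoot

/-- The positive root of `x (s x + c) = l` for `s, l > 0`, given by the quadratic formula. -/
noncomputable def posRoot (s l c : ℝ) : ℝ :=
  (-c + √(c ^ 2 + 4 * s * l)) / (2 * s)

variable {s l : ℝ}

lemma posRoot_pos (hs : 0 < s) (hl : 0 < l) (c : ℝ) : 0 < posRoot s l c := by
  have habs : |c| < √(c ^ 2 + 4 * s * l) := by
    rw [← Real.sqrt_sq_eq_abs]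
    exact Real.sqrt_lt_sqrt (sq_nonneg c) (lt_add_of_pos_right _ (by positivity))
  exact div_pos (by linarith [le_abs_self c]) (by positivity)

lemma posRoot_mul_add (hs : 0 < s) (hl : 0 ≤ l) (c : ℝ) :
    posRoot s l c * (s * posRoot s l c + c) = l := by
  have hsq : √(c ^ 2 + 4 * s * l) ^ 2 = c ^ 2 + 4 * s * l := Real.sq_sqrt (by positivity)
  unfold posRoot
  generalize √(c ^ 2 + 4 * s * l) = q at hsq
  field_simp
  linear_combination hsq

lemma posRoot_antitone (hs : 0 < s) (hl : 0 < l) : Antitone (posRoot s l) := by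
  intro c c' hc
  have h := posRoot_mul_add hs hl.le c
  have h' := posRoot_mul_add hs hl.le c'
  exact le_of_mul_add_le_mul_add hs.le (posRoot_pos hs hl c) (hl.trans_eq h.symm) hc
    (h'.trans h.symm).le

lemma eq_posRoot (hs : 0 < s) (hl : 0 < l) {c x : ℝ} (hx : 0 < x) (h : x * (s * x + c) = l) :
    x = posRoot s l c := by
  have hroot := posRoot_mul_add hs hl.le c
  exact le_antisymm
    (le_of_mul_add_le_mul_add hs.le (posRoot_pos hs hl c) (hl.trans_eq hroot.symm) le_rfl
      (h.trans hroot.symm).le)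
    (le_of_mul_add_le_mul_add hs.le hx (hl.trans_eq h.symm) le_rfl (hroot.trans h.symm).le)

end PosRoot

section Dichotomy

variable {s M l k x y : ℝ}

lemma sqrt_mul_le_sqrt_of_mul_add_le (hs : 0 < s) (hl : 0 ≤ l)
    (hk : -2 * (s - M) * √l ≤ k * √(2 * M - s)) (hx : 0 ≤ x) (h : x * (s * x + k) ≤ l) :
    √(2 * M - s) * x ≤ √l := by
  by_contra! hlt
  have hq : 0 < √(2 * M - s) := pos_of_mul_pos_left ((Real.sqrt_nonneg l).trans_lt hlt) hx
  have hM : 0 < 2 * M := by linarith [Real.sqrt_pos.1 hq]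
  have hq2 : √(2 * M - s) ^ 2 = 2 * M - s := Real.sq_sqrt (Real.sqrt_pos.1 hq).le
  have hr2 : √l ^ 2 = l := Real.sq_sqrt hl
  have hr : 0 ≤ √l := Real.sqrt_nonneg l
  set q := √(2 * M - s)
  set r := √l
  have hscaled : q ^ 2 * (x * (s * x + k)) ≤ q ^ 2 * r ^ 2 := by rw [hr2]; gcongr
  have hk' : -2 * (s - M) * r * (q * x) ≤ k * q * (q * x) := by gcongr
  have hquad : s * (q * x) ^ 2 - 2 * (s - M) * r * (q * x) ≤ (2 * M - s) * r ^ 2 := by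
    rw [← hq2]
    linarith
  have hfactor : 0 < (q * x - r) * (s * (q * x - r) + 2 * M * r) := by
    have : 0 < q * x - r := sub_pos.2 hlt
    positivity
  linarith

lemma two_mul_mul_le_of_star_or_diamond (hs : 0 < s) (hl : 0 ≤ l)
    (hk : 2 * M ≤ s ∨ -2 * (s - M) * √l ≤ k * √(2 * M - s))
    (hx : 0 ≤ x) (hy : 0 ≤ y) (hxl : x * (s * x + k) ≤ l) (hyl : y * (s * y + k) ≤ l) :
    2 * M * (x * y) ≤ l + s * (x * y) := by
  rcases hk with hstar | hdiamond
  · exact (mul_le_mul_of_nonneg_right hstar (by positivity)).trans (le_add_of_nonneg_left hl)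
  have hqx := sqrt_mul_le_sqrt_of_mul_add_le hs hl hdiamond hx hxl
  have hqy := sqrt_mul_le_sqrt_of_mul_add_le hs hl hdiamond hy hyl
  have hprod : (2 * M - s) * (x * y) ≤ l :=
    calc (2 * M - s) * (x * y)
        ≤ √(2 * M - s) ^ 2 * (x * y) := by
          gcongr
          rw [Real.sq_sqrt']
          exact le_max_left _ _
      _ = √(2 * M - s) * x * (√(2 * M - s) * y) := by ring
      _ ≤ √l * √l := by gcongr
      _ = l := Real.mul_self_sqrt hl
  linarith

end Dichotomy

lemma frequently_sqrt_lt_mul_of_liminf_le_zero {B : ℕ → ℝ}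
    (hB : liminf (fun n : ℕ ↦ ((1 / (n : ℝ) ^ 2 * B n : ℝ) : EReal)) atTop ≤ 0)
    {a ε : ℝ} (ha : 0 < a) (hε : 0 < ε) : ∃ᶠ n : ℕ in atTop, √(a * B n) < ε * n := by
  have hfreq := frequently_lt_of_liminf_lt (by isBoundedDefault)
    (hB.trans_lt (EReal.coe_pos.2 (by positivity : 0 < ε ^ 2 / a)))
  refine (hfreq.and_eventually (eventually_gt_atTop 0)).mono fun n ⟨hn, hn0⟩ ↦ ?_
  have hn0' : (0 : ℝ) < n := Nat.cast_pos.2 hn0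
  rw [EReal.coe_lt_coe_iff, one_div_mul_eq_div, div_lt_div_iff₀ (by positivity) ha] at hn
  rw [Real.sqrt_lt' (by positivity)]
  linarith

lemma exists_map_map_eq_of_antitone {α : Type*} [ConditionallyCompleteLattice α] {T : α → α}
    (hT : Antitone T) (hbdd : BddBelow (Set.range T)) : ∃ g, T (T g) = g := by
  obtain ⟨L, hL⟩ := hbdd
  have hL' : ∀ w, L ≤ T w := fun w ↦ hL ⟨w, rfl⟩
  let S : Set α := {w | w ≤ T (T w)}
  have hTT : Monotone (T ∘ T) := hT.comp hT
  have hS : BddAbove S := ⟨T L, fun w hw ↦ hw.trans (hT (hL' _))⟩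
  have hg : sSup S ≤ T (T (sSup S)) :=
    csSup_le ⟨L, hL' _⟩ fun w hw ↦ hw.trans (hTT (le_csSup hS hw))
  exact ⟨sSup S, le_antisymm (le_csSup hS (hTT hg)) hg⟩

/-- The data of the boundary value problem `ℓₙ = xₙ (σₙ₁ xₙ₊₁ + σₙ₀ xₙ + σₙ₋₁ xₙ₋₁) + κₙ xₙ` for
`n ≥ 1` with prescribed `x₀`, under the standing sign conditions. The fields `σ1`, `σ0`, `σm1` are
the coefficients `σₙ₁`, `σₙ₀`, `σₙ₋₁`; only their values at `n ≥ 1` are meaningful. -/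
structure FreudEquation where
  ℓ : ℕ → ℝ
  σ1 : ℕ → ℝ
  σ0 : ℕ → ℝ
  σm1 : ℕ → ℝ
  κ : ℕ → ℝ
  x₀ : ℝ
  ℓ_pos : ∀ n, 1 ≤ n → 0 < ℓ n
  σ0_pos : ∀ n, 1 ≤ n → 0 < σ0 n
  σ1_nonneg : ∀ n, 1 ≤ n → 0 ≤ σ1 n
  σm1_nonneg : ∀ n, 1 ≤ n → 0 ≤ σm1 n

namespace FreudEquation

variable (E : FreudEquation) {v w x : ℕ → ℝ} {n : ℕ}

/-- The linear coefficient `c` of the quadratic equation `xₙ (σₙ₀ xₙ + c) = ℓₙ` obtained when the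
neighbours of `xₙ` are taken from `w`. -/
def coupling (w : ℕ → ℝ) (n : ℕ) : ℝ :=
  E.σ1 n * w (n + 1) + E.σm1 n * w (n - 1) + E.κ n

/-- The antitone operator `T` whose fixed points are the positive solutions: it keeps `x₀` and
solves for each `xₙ`, `n ≥ 1`, with neighbours taken from `w`. -/
noncomputable def relax (w : ℕ → ℝ) (n : ℕ) : ℝ :=
  if n = 0 then E.x₀ else posRoot (E.σ0 n) (E.ℓ n) (E.coupling w n)

/-- The least sequence that starts at `x₀` and is nonnegative afterwards. Its coupling is
`σ₁₋₁ x₀ + κ₁` at `n = 1` and `κₙ` for `n ≥ 2`, the constants occurring in (✧). -/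
noncomputable def floor : ℕ → ℝ :=
  Pi.single 0 E.x₀

/-- The bound `σₙ = max(σₙ₋₁, σₙ₁)` on both neighbour coefficients. -/
noncomputable def σ (n : ℕ) : ℝ :=
  max (E.σm1 n) (E.σ1 n)

/-- Condition (★) or the square-root inequality of (✧) at the index `n`. Writing
`E.coupling E.floor n` for `κₙ` includes the condition on `x₀` at `n = 1`. -/
def StarOrDiamond (n : ℕ) : Prop :=
  2 * E.σ n ≤ E.σ0 n ∨
    -2 * (E.σ0 n - E.σ n) * √(E.ℓ n) ≤ E.coupling E.floor n * √(2 * E.σ n - E.σ0 n)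

/-- The quantity `ℓₙ / σₙ₀ + (κₙ⁻)² / σₙ₀²`, which controls the size of a positive solution. -/
noncomputable def growth (n : ℕ) : ℝ :=
  E.ℓ n / E.σ0 n + ((|E.κ n| - E.κ n) / 2) ^ 2 / E.σ0 n ^ 2

lemma coupling_floor_one : E.coupling E.floor 1 = E.σm1 1 * E.x₀ + E.κ 1 := by
  simp [coupling, floor]

lemma coupling_floor_of_two_le (hn : 2 ≤ n) : E.coupling E.floor n = E.κ n := by
  have : n - 1 ≠ 0 := by omega
  simp [coupling, floor, this]

lemma coupling_mono (hn : 1 ≤ n) (h : v ≤ w) : E.coupling v n ≤ E.coupling w n := by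
  have := E.σ1_nonneg n hn
  have := E.σm1_nonneg n hn
  unfold coupling
  gcongr <;> apply h

lemma abs_coupling_sub_le (hn : 1 ≤ n) (v w : ℕ → ℝ) :
    |E.coupling v n - E.coupling w n| ≤
      E.σ n * (|v (n + 1) - w (n + 1)| + |v (n - 1) - w (n - 1)|) :=
  calc |E.coupling v n - E.coupling w n|
      = |E.σ1 n * (v (n + 1) - w (n + 1)) + E.σm1 n * (v (n - 1) - w (n - 1))| := by
        unfold coupling
        ring_nf
    _ ≤ E.σ1 n * |v (n + 1) - w (n + 1)| + E.σm1 n * |v (n - 1) - w (n - 1)| := by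
        refine (abs_add_le _ _).trans_eq ?_
        rw [abs_mul, abs_mul, abs_of_nonneg (E.σ1_nonneg n hn), abs_of_nonneg (E.σm1_nonneg n hn)]
    _ ≤ E.σ n * |v (n + 1) - w (n + 1)| + E.σ n * |v (n - 1) - w (n - 1)| := by
        gcongr
        exacts [le_max_right _ _, le_max_left _ _]
    _ = E.σ n * (|v (n + 1) - w (n + 1)| + |v (n - 1) - w (n - 1)|) := by ring

lemma relax_zero (w : ℕ → ℝ) : E.relax w 0 = E.x₀ := if_pos rfl

lemma relax_of_one_le (hn : 1 ≤ n) (w : ℕ → ℝ) :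
    E.relax w n = posRoot (E.σ0 n) (E.ℓ n) (E.coupling w n) :=
  if_neg (Nat.one_le_iff_ne_zero.1 hn)

lemma relax_pos (hn : 1 ≤ n) (w : ℕ → ℝ) : 0 < E.relax w n := by
  rw [E.relax_of_one_le hn]
  exact posRoot_pos (E.σ0_pos n hn) (E.ℓ_pos n hn) _

lemma relax_mul_add (hn : 1 ≤ n) (w : ℕ → ℝ) :
    E.relax w n * (E.σ0 n * E.relax w n + E.coupling w n) = E.ℓ n := by
  rw [E.relax_of_one_le hn]
  exact posRoot_mul_add (E.σ0_pos n hn) (E.ℓ_pos n hn).le _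

lemma relax_antitone : Antitone E.relax := by
  intro v w hvw n
  rcases n.eq_zero_or_pos with rfl | hn
  · rw [relax_zero, relax_zero]
  · rw [E.relax_of_one_le hn, E.relax_of_one_le hn]
    exact posRoot_antitone (E.σ0_pos n hn) (E.ℓ_pos n hn) (E.coupling_mono hn hvw)

lemma floor_le_relax (w : ℕ → ℝ) : E.floor ≤ E.relax w := by
  intro n
  rcases n.eq_zero_or_pos with rfl | hn
  · simp [floor, relax_zero]
  · simpa [floor, hn.ne'] using (E.relax_pos hn w).le

lemma relax_eq_self_iff : E.relax x = x ↔ x 0 = E.x₀ ∧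
    (∀ n, 1 ≤ n →
      E.ℓ n = x n * (E.σ1 n * x (n + 1) + E.σ0 n * x n + E.σm1 n * x (n - 1)) + E.κ n * x n) ∧
    ∀ n, 1 ≤ n → 0 < x n := by
  constructor
  · intro h
    refine ⟨by rw [← h, relax_zero], fun n hn ↦ ?_, fun n hn ↦ h ▸ E.relax_pos hn x⟩
    have hroot := E.relax_mul_add hn x
    rw [h, coupling] at hroot
    linear_combination -hroot
  · rintro ⟨h0, heq, hpos⟩
    ext n
    rcases n.eq_zero_or_pos with rfl | hn
    · rw [relax_zero, h0]
    · rw [E.relax_of_one_le hn]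
      refine (eq_posRoot (E.σ0_pos n hn) (E.ℓ_pos n hn) (hpos n hn) ?_).symm
      rw [coupling]
      linear_combination -heq n hn

lemma relax_mul_add_coupling_floor_le (hn : 1 ≤ n) (hw : E.floor ≤ w) :
    E.relax w n * (E.σ0 n * E.relax w n + E.coupling E.floor n) ≤ E.ℓ n := by
  have := (E.relax_pos hn w).le
  rw [← E.relax_mul_add hn w]
  gcongr
  exact E.coupling_mono hn hw

lemma relax_le_sqrt_growth (hn : 2 ≤ n) (hw : E.floor ≤ w) :
    E.relax w n ≤ √(2 * E.growth n) := by
  have hn1 : 1 ≤ n := one_le_two.trans hn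
  have h := E.relax_mul_add_coupling_floor_le hn1 hw
  rw [E.coupling_floor_of_two_le hn] at h
  exact Real.le_sqrt_of_sq_le
    (sq_le_of_mul_add_le (E.σ0_pos n hn1) (E.relax_pos hn1 w).le h)

lemma abs_relax_sub_le_sqrt_growth (hn : 2 ≤ n) (hv : E.floor ≤ v) (hw : E.floor ≤ w) :
    |E.relax v n - E.relax w n| ≤ √(2 * E.growth n) := by
  have hn1 : 1 ≤ n := one_le_two.trans hn
  exact abs_sub_le_of_nonneg_of_le (E.relax_pos hn1 v).le (E.relax_le_sqrt_growth hn hv)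
    (E.relax_pos hn1 w).le (E.relax_le_sqrt_growth hn hw)

lemma two_mul_abs_relax_sub_le (hn : 1 ≤ n) (hE : E.StarOrDiamond n) (hv : E.floor ≤ v)
    (hw : E.floor ≤ w) : 2 * |E.relax v n - E.relax w n| ≤
      |v (n + 1) - w (n + 1)| + |v (n - 1) - w (n - 1)| := by
  have hσ0 := E.σ0_pos n hn
  have hℓ := E.ℓ_pos n hn
  have hx := E.relax_pos hn v
  have hy := E.relax_pos hn w
  have hprod : 2 * E.σ n * (E.relax v n * E.relax w n) ≤
      E.ℓ n + E.σ0 n * (E.relax v n * E.relax w n) :=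
    two_mul_mul_le_of_star_or_diamond hσ0 hℓ.le hE hx.le hy.le
      (E.relax_mul_add_coupling_floor_le hn hv) (E.relax_mul_add_coupling_floor_le hn hw)
  exact two_mul_abs_sub_le_of_mul_add_eq hℓ hσ0.le hx hy (E.relax_mul_add hn v)
    (E.relax_mul_add hn w) hprod (by positivity) (E.abs_coupling_sub_le hn v w)

section Rigidity

variable (hE : ∀ n, 1 ≤ n → E.StarOrDiamond n)
  (hgrowth : liminf (fun n : ℕ ↦ ((1 / (n : ℝ) ^ 2 * E.growth n : ℝ) : EReal)) atTop ≤ 0)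

include hE hgrowth

lemma relax_eq_relax_of_abs_sub_le (hv : E.floor ≤ v) (hw : E.floor ≤ w)
    (h : ∀ n, |v n - w n| ≤ |E.relax v n - E.relax w n|) : E.relax v = E.relax w := by
  let d : ℕ → ℝ := fun n ↦ |E.relax v n - E.relax w n|
  have hzero : d 0 ≤ 0 := by simp [d, relax_zero]
  have hconvex : ∀ n, 1 ≤ n → 2 * d n ≤ d (n + 1) + d (n - 1) := fun n hn ↦
    (E.two_mul_abs_relax_sub_le hn (hE n hn) hv hw).trans (add_le_add (h _) (h _))
  have hsmall : ∀ ε > 0, ∃ᶠ n : ℕ in atTop, d n < ε * n := fun ε hε ↦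
    ((frequently_sqrt_lt_mul_of_liminf_le_zero hgrowth two_pos hε).and_eventually
      (eventually_ge_atTop 2)).mono
        fun _ ⟨hlt, hn⟩ ↦ (E.abs_relax_sub_le_sqrt_growth hn hv hw).trans_lt hlt
  ext n
  exact sub_eq_zero.1 (abs_nonpos_iff.1 (nonpos_of_convex_of_frequently_lt hzero hconvex hsmall n))

lemma existsUnique_relax_eq_self : ∃! x, E.relax x = x := by
  obtain ⟨g, hg⟩ := exists_map_map_eq_of_antitone E.relax_antitone
    ⟨E.floor, Set.forall_mem_range.2 E.floor_le_relax⟩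
  have hfix : E.relax g = g := by
    refine (E.relax_eq_relax_of_abs_sub_le hE hgrowth (E.floor_le_relax g)
      (hg ▸ E.floor_le_relax _) fun n ↦ ?_).symm.trans hg
    rw [hg, abs_sub_comm]
  refine ⟨g, hfix, fun x hx ↦ ?_⟩
  have hxg := E.relax_eq_relax_of_abs_sub_le hE hgrowth (hx ▸ E.floor_le_relax x)
    (hfix ▸ E.floor_le_relax g) fun n ↦ by rw [hx, hfix]
  rw [← hx, hxg, hfix]

end Rigidity

end FreudEquation

theorem stmt5_general (ℓ σ1 σ0 σm1 κ : ℕ → ℝ) (x₀ : ℝ)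
    (hℓ : ∀ n : ℕ, 1 ≤ n → 0 < ℓ n)
    (hσ0 : ∀ n : ℕ, 1 ≤ n → 0 < σ0 n)
    (hσ1 : ∀ n : ℕ, 1 ≤ n → 0 ≤ σ1 n)
    (hσm1 : ∀ n : ℕ, 1 ≤ n → 0 ≤ σm1 n)
    (hliminf :
      liminf
        (fun n : ℕ ↦
          ((1 / (n : ℝ) ^ 2 *
            (ℓ n / σ0 n + ((|κ n| - κ n) / 2) ^ 2 / σ0 n ^ 2) : ℝ) : EReal))
        atTop ≤ 0)
    (hcond : ∀ n : ℕ, 2 ≤ n →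
      2 * max (σm1 n) (σ1 n) ≤ σ0 n ∨
      -2 * (σ0 n - max (σm1 n) (σ1 n)) * √(ℓ n) ≤
        κ n * √(2 * max (σm1 n) (σ1 n) - σ0 n))
    (hx₀ : 2 * max (σm1 1) (σ1 1) ≤ σ0 1 ∨
      -2 * (σ0 1 - max (σm1 1) (σ1 1)) * √(ℓ 1) ≤
        (σm1 1 * x₀ + κ 1) * √(2 * max (σm1 1) (σ1 1) - σ0 1)) :
    ∃! x : ℕ → ℝ, x 0 = x₀ ∧
      (∀ n : ℕ, 1 ≤ n →
        ℓ n = x n * (σ1 n * x (n + 1) + σ0 n * x n + σm1 n * x (n - 1)) + κ n * x n) ∧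
      ∀ n : ℕ, 1 ≤ n → 0 < x n := by
  let E : FreudEquation := ⟨ℓ, σ1, σ0, σm1, κ, x₀, hℓ, hσ0, hσ1, hσm1⟩
  have hE : ∀ n, 1 ≤ n → E.StarOrDiamond n := by
    intro n hn
    rw [FreudEquation.StarOrDiamond]
    rcases hn.eq_or_lt with rfl | hn
    · rw [E.coupling_floor_one]
      exact hx₀
    · rw [E.coupling_floor_of_two_le hn]
      exact hcond n hn
  simpa only [E.relax_eq_self_iff] using E.existsUnique_relax_eq_self hE hliminf

/-- Uniqueness theorem: under the liminf condition and the dichotomy (★)/(✧) on the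
coefficients (plus the extra condition on `x₀` when `n = 1` satisfies (✧)), there is a
unique `x* > 0` such that every positive solution of
`ℓₙ = xₙ (σₙ₁ xₙ₊₁ + σₙ₀ xₙ + σₙ₋₁ xₙ₋₁) + κₙ xₙ` starting from `x₀` has `x₁ = x*`.
Here `σₙ := max(σₙ₋₁, σₙ₁)` and `κ⁻ := (|κ| − κ)/2`. -/
theorem stmt5 (ℓ σ1 σ0 σm1 κ : ℕ → ℝ) (x₀ : ℝ)
    (hℓ : ∀ n : ℕ, 1 ≤ n → 0 < ℓ n)
    (hσ0 : ∀ n : ℕ, 1 ≤ n → 0 < σ0 n)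
    (hσ1 : ∀ n : ℕ, 1 ≤ n → 0 ≤ σ1 n)
    (hσm1 : ∀ n : ℕ, 1 ≤ n → 0 ≤ σm1 n)
    (hliminf :
      Filter.liminf
        (fun n : ℕ =>
          (((1 / (n : ℝ) ^ 2) *
            (ℓ n / σ0 n + ((|κ n| - κ n) / 2) ^ 2 / (σ0 n) ^ 2) : ℝ) : EReal))
        Filter.atTop = 0)
    (hcond : ∀ n : ℕ, 1 ≤ n →
      (2 * max (σm1 n) (σ1 n) ≤ σ0 n) ∨
      (max (σm1 n) (σ1 n) ≤ σ0 n ∧ σ0 n < 2 * max (σm1 n) (σ1 n) ∧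
        -2 * (σ0 n - max (σm1 n) (σ1 n)) * Real.sqrt (ℓ n) ≤
          κ n * Real.sqrt (2 * max (σm1 n) (σ1 n) - σ0 n)))
    (hx₀ : ¬ (2 * max (σm1 1) (σ1 1) ≤ σ0 1) →
      -2 * (σ0 1 - max (σm1 1) (σ1 1)) * Real.sqrt (ℓ 1) ≤
        (σm1 1 * x₀ + κ 1) * Real.sqrt (2 * max (σm1 1) (σ1 1) - σ0 1)) :
    ∃! xstar : ℝ, 0 < xstar ∧
      ∀ x : ℕ → ℝ, x 0 = x₀ →
        (∀ n : ℕ, 1 ≤ n →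
          ℓ n = x n * (σ1 n * x (n + 1) + σ0 n * x n + σm1 n * x (n - 1)) + κ n * x n) →
        (∀ n : ℕ, 1 ≤ n → 0 < x n) →
        x 1 = xstar := by
  obtain ⟨g, ⟨hg0, hgeq, hgpos⟩, huniq⟩ := stmt5_general ℓ σ1 σ0 σm1 κ x₀ hℓ hσ0 hσ1 hσm1
    hliminf.le (fun n hn ↦ (hcond n (one_le_two.trans hn)).imp_right (·.2.2))
    (or_iff_not_imp_left.2 hx₀)
  exact ⟨g 1, ⟨hgpos 1 le_rfl, fun x hx0 heq hpos ↦ congrFun (huniq x ⟨hx0, heq, hpos⟩) 1⟩,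
    fun y hy ↦ (hy.2 g hg0 hgeq hgpos).symm⟩
end

section
/- Suppose ℓ_n > 0, σ_{n,0} > 0, σ_{n,1} ≥ 0, σ_{n,-1} ≥ 0, κ_n ∈ ℝ for all n ≥ 1, and the coefficients satisfy liminf_{n→∞} σ_{n,0} > 0, limsup_{n→∞} σ_{n,1}√(ℓ_{n+1}/ℓ_n) < ∞, limsup_{n→∞} σ_{n,-1}√(ℓ_{n-1}/ℓ_n) < ∞, and limsup_{n→∞} |κ_n|/√ℓ_n < ∞. If a real sequence (x_n)_{n≥0} satisfies ℓ_n = x_n (σ_{n,1} x_{n+1} + σ_{n,0} x_n + σ_{n,-1} x_{n-1}) + κ_n x_n for all n ≥ 1, then liminf_{n→∞} x_n/√ℓ_n > −∞ if and only if limsup_{n→∞} x_n/√ℓ_n < ∞. -/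
/-!
Put `yₙ = xₙ / √ℓₙ`. Dividing the recurrence by `ℓₙ` gives `yₙ (sₙ yₙ + tₙ) ≤ 1` with
`tₙ = aₙ yₙ₊₁ + bₙ yₙ₋₁ + kₙ`, where eventually `aₙ, bₙ` are nonnegative and bounded, `kₙ` is
bounded and `sₙ ≥ c > 0`. If `y` is eventually bounded below, then so is `t`, say by `m`, and
wherever `yₙ > 1` we get `c yₙ + m ≤ sₙ yₙ + tₙ ≤ 1 / yₙ < 1`, which bounds `yₙ` from above.
The inequality is invariant under `(y, k) ↦ (-y, -k)`, which yields the converse.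
-/

open Filter

section ERealLimits

variable {α : Type*} {f : Filter α} {u : α → ℝ}

lemma limsup_coe_lt_top_iff :
    limsup (fun n => (u n : EReal)) f < ⊤ ↔ f.IsBoundedUnder (· ≤ ·) u := by
  constructor
  · intro h
    obtain ⟨B, hB, -⟩ := EReal.lt_iff_exists_real_btwn.1 h
    exact isBoundedUnder_of_eventually_le
      ((eventually_lt_of_limsup_lt hB).mono fun _ hn => (EReal.coe_lt_coe_iff.1 hn).le)
  · rintro ⟨B, hB⟩
    exact (limsup_le_of_le (by isBoundedDefault)
      ((eventually_map.1 hB).mono fun _ hn => EReal.coe_le_coe_iff.2 hn)).trans_lt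
      (EReal.coe_lt_top B)

lemma bot_lt_liminf_coe_iff :
    ⊥ < liminf (fun n => (u n : EReal)) f ↔ f.IsBoundedUnder (· ≥ ·) u := by
  constructor
  · intro h
    obtain ⟨B, -, hB⟩ := EReal.lt_iff_exists_real_btwn.1 h
    exact isBoundedUnder_of_eventually_ge
      ((eventually_lt_of_lt_liminf hB).mono fun _ hn => (EReal.coe_lt_coe_iff.1 hn).le)
  · rintro ⟨B, hB⟩
    exact (EReal.bot_lt_coe B).trans_le (le_liminf_of_le (by isBoundedDefault)
      ((eventually_map.1 hB).mono fun _ hn => EReal.coe_le_coe_iff.2 hn))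

lemma exists_pos_eventually_le_of_pos_liminf_coe
    (h : 0 < liminf (fun n => (u n : EReal)) f) : ∃ c > 0, ∀ᶠ n in f, c ≤ u n := by
  obtain ⟨c, hc, hcu⟩ := EReal.lt_iff_exists_real_btwn.1 h
  exact ⟨c, EReal.coe_pos.1 hc,
    (eventually_lt_of_lt_liminf hcu).mono fun _ hn => (EReal.coe_lt_coe_iff.1 hn).le⟩

end ERealLimits

section Boundedness

variable {𝕜 : Type*} [Field 𝕜] [LinearOrder 𝕜] [IsStrictOrderedRing 𝕜]

lemma le_max_one_of_mul_add_le_one {c m s t y : 𝕜} (hc : 0 < c) (hs : c ≤ s) (ht : m ≤ t)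
    (h : y * (s * y + t) ≤ 1) : y ≤ max 1 ((1 - m) / c) := by
  rcases le_or_gt y 1 with hy | hy
  · exact le_max_of_le_left hy
  · have hy0 : 0 < y := one_pos.trans hy
    have hfactor : s * y + t ≤ 1 := le_of_mul_le_mul_left (h.trans (by simpa using hy.le)) hy0
    have hcs : c * y ≤ s * y := mul_le_mul_of_nonneg_right hs hy0.le
    exact le_max_of_le_right ((le_div_iff₀' hc).2 (by linarith))

variable {α : Type*} {f : Filter α}

lemma isBoundedUnder_ge_mul_of_nonneg {a p : α → 𝕜} (ha0 : ∀ᶠ n in f, 0 ≤ a n)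
    (ha : f.IsBoundedUnder (· ≤ ·) a) (hp : f.IsBoundedUnder (· ≥ ·) p) :
    f.IsBoundedUnder (· ≥ ·) fun n => a n * p n := by
  obtain ⟨A, hA⟩ := ha
  obtain ⟨m, hm⟩ := hp
  refine isBoundedUnder_of_eventually_ge (a := A * min m 0) ?_
  filter_upwards [ha0, eventually_map.1 hA, eventually_map.1 hm] with n h0 hA hm
  calc A * min m 0 ≤ a n * min m 0 := mul_le_mul_of_nonpos_right hA (min_le_right m 0)
    _ ≤ a n * p n := mul_le_mul_of_nonneg_left ((min_le_left m 0).trans hm) h0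

lemma isBoundedUnder_le_of_mul_add_le_one {c : 𝕜} {s t y : α → 𝕜} (hc : 0 < c)
    (hs : ∀ᶠ n in f, c ≤ s n) (ht : f.IsBoundedUnder (· ≥ ·) t)
    (h : ∀ᶠ n in f, y n * (s n * y n + t n) ≤ 1) : f.IsBoundedUnder (· ≤ ·) y := by
  obtain ⟨m, hm⟩ := ht
  refine isBoundedUnder_of_eventually_le (a := max 1 ((1 - m) / c)) ?_
  filter_upwards [hs, eventually_map.1 hm, h] with n hs hm h
  exact le_max_one_of_mul_add_le_one hc hs hm h

variable {c : 𝕜} {a b s k y : ℕ → 𝕜}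

lemma isBoundedUnder_le_of_isBoundedUnder_ge (hc : 0 < c) (hs : ∀ᶠ n in atTop, c ≤ s n)
    (ha0 : ∀ᶠ n in atTop, 0 ≤ a n) (ha : atTop.IsBoundedUnder (· ≤ ·) a)
    (hb0 : ∀ᶠ n in atTop, 0 ≤ b n) (hb : atTop.IsBoundedUnder (· ≤ ·) b)
    (hk : atTop.IsBoundedUnder (· ≥ ·) k)
    (h : ∀ᶠ n in atTop, y n * (s n * y n + (a n * y (n + 1) + b n * y (n - 1) + k n)) ≤ 1)
    (hy : atTop.IsBoundedUnder (· ≥ ·) y) : atTop.IsBoundedUnder (· ≤ ·) y := by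
  have hnext : atTop.IsBoundedUnder (· ≥ ·) fun n => a n * y (n + 1) :=
    isBoundedUnder_ge_mul_of_nonneg ha0 ha ((tendsto_add_atTop_nat 1).isBoundedUnder_comp hy)
  have hprev : atTop.IsBoundedUnder (· ≥ ·) fun n => b n * y (n - 1) :=
    isBoundedUnder_ge_mul_of_nonneg hb0 hb ((tendsto_sub_atTop_nat 1).isBoundedUnder_comp hy)
  exact isBoundedUnder_le_of_mul_add_le_one hc hs
    (isBoundedUnder_ge_add (isBoundedUnder_ge_add hnext hprev) hk) h

lemma isBoundedUnder_ge_iff_isBoundedUnder_le (hc : 0 < c) (hs : ∀ᶠ n in atTop, c ≤ s n)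
    (ha0 : ∀ᶠ n in atTop, 0 ≤ a n) (ha : atTop.IsBoundedUnder (· ≤ ·) a)
    (hb0 : ∀ᶠ n in atTop, 0 ≤ b n) (hb : atTop.IsBoundedUnder (· ≤ ·) b)
    (hk : atTop.IsBoundedUnder (· ≤ ·) fun n => |k n|)
    (h : ∀ᶠ n in atTop, y n * (s n * y n + (a n * y (n + 1) + b n * y (n - 1) + k n)) ≤ 1) :
    atTop.IsBoundedUnder (· ≥ ·) y ↔ atTop.IsBoundedUnder (· ≤ ·) y := by
  obtain ⟨hk_le, hk_ge⟩ := isBoundedUnder_le_abs.1 hk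
  refine ⟨isBoundedUnder_le_of_isBoundedUnder_ge hc hs ha0 ha hb0 hb hk_ge h, fun hy => ?_⟩
  have h_neg : ∀ᶠ n in atTop,
      -y n * (s n * -y n + (a n * -y (n + 1) + b n * -y (n - 1) + -k n)) ≤ 1 :=
    h.mono fun n hn => by linear_combination hn
  exact isBoundedUnder_le_neg.1 (isBoundedUnder_le_of_isBoundedUnder_ge hc hs ha0 ha hb0 hb
    (isBoundedUnder_ge_neg.2 hk_le) h_neg (isBoundedUnder_ge_neg.2 hy))

end Boundedness

lemma sqrt_div_mul_div_sqrt {l l' : ℝ} (hl' : 0 < l') (z : ℝ) :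
    √(l' / l) * (z / √l') = z / √l := by
  have hne : √l' ≠ 0 := (Real.sqrt_pos.2 hl').ne'
  rw [Real.sqrt_div hl'.le]
  field_simp

lemma div_sqrt_mul_add_le_one {l l₁ l₂ r s q κ z z₁ z₂ : ℝ} (hl : 0 < l) (hl₁ : 0 < l₁)
    (hl₂ : 0 < l₂) (h : z * (r * z₁ + s * z + q * z₂) + κ * z ≤ l) :
    z / √l * (s * (z / √l) + (r * √(l₁ / l) * (z₁ / √l₁) + q * √(l₂ / l) * (z₂ / √l₂) + κ / √l))
      ≤ 1 := by
  rw [mul_assoc r, mul_assoc q, sqrt_div_mul_div_sqrt hl₁, sqrt_div_mul_div_sqrt hl₂]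
  calc z / √l * (s * (z / √l) + (r * (z₁ / √l) + q * (z₂ / √l) + κ / √l))
      = (z * (r * z₁ + s * z + q * z₂) + κ * z) / (√l * √l) := by ring
    _ = (z * (r * z₁ + s * z + q * z₂) + κ * z) / l := by rw [Real.mul_self_sqrt hl.le]
    _ ≤ 1 := (div_le_one hl).2 h

theorem stmt7_general (ℓ σ1 σ0 σm1 κ x : ℕ → ℝ)
    (hℓ : ∀ᶠ n in atTop, 0 < ℓ n)
    (hσ1 : ∀ᶠ n in atTop, 0 ≤ σ1 n)
    (hσm1 : ∀ᶠ n in atTop, 0 ≤ σm1 n)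
    (hliminfσ0 : 0 < liminf (fun n => (σ0 n : EReal)) atTop)
    (hlimsup1 : limsup (fun n => ((σ1 n * √(ℓ (n + 1) / ℓ n) : ℝ) : EReal)) atTop < ⊤)
    (hlimsupm1 : limsup (fun n => ((σm1 n * √(ℓ (n - 1) / ℓ n) : ℝ) : EReal)) atTop < ⊤)
    (hlimsupκ : limsup (fun n => ((|κ n| / √(ℓ n) : ℝ) : EReal)) atTop < ⊤)
    (hle : ∀ᶠ n in atTop,
      x n * (σ1 n * x (n + 1) + σ0 n * x n + σm1 n * x (n - 1)) + κ n * x n ≤ ℓ n) :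
    ⊥ < liminf (fun n => ((x n / √(ℓ n) : ℝ) : EReal)) atTop ↔
      limsup (fun n => ((x n / √(ℓ n) : ℝ) : EReal)) atTop < ⊤ := by
  rw [limsup_coe_lt_top_iff] at hlimsup1 hlimsupm1 hlimsupκ
  rw [bot_lt_liminf_coe_iff, limsup_coe_lt_top_iff]
  obtain ⟨c, hc, hcσ0⟩ := exists_pos_eventually_le_of_pos_liminf_coe hliminfσ0
  have hκ : atTop.IsBoundedUnder (· ≤ ·) fun n => |κ n / √(ℓ n)| := by
    simpa only [abs_div, abs_of_nonneg (Real.sqrt_nonneg _)] using hlimsupκ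
  refine isBoundedUnder_ge_iff_isBoundedUnder_le hc hcσ0
    (hσ1.mono fun _ hn => mul_nonneg hn (Real.sqrt_nonneg _)) hlimsup1
    (hσm1.mono fun _ hn => mul_nonneg hn (Real.sqrt_nonneg _)) hlimsupm1 hκ ?_
  filter_upwards [hℓ, (tendsto_add_atTop_nat 1).eventually hℓ,
    (tendsto_sub_atTop_nat 1).eventually hℓ, hle] with n hn hnext hprev hle
  exact div_sqrt_mul_add_le_one hn hnext hprev hle

/-- Boundedness theorem: under the stated coefficient conditions, any solution of
`ℓₙ = xₙ (σₙ₁ xₙ₊₁ + σₙ₀ xₙ + σₙ₋₁ xₙ₋₁) + κₙ xₙ` satisfies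
`liminf xₙ/√ℓₙ > −∞ ⟺ limsup xₙ/√ℓₙ < ∞`. -/
theorem stmt7 (ℓ σ1 σ0 σm1 κ : ℕ → ℝ) (x : ℕ → ℝ)
    (hℓ0 : 0 < ℓ 0)
    (hℓ : ∀ n : ℕ, 1 ≤ n → 0 < ℓ n)
    (hσ0 : ∀ n : ℕ, 1 ≤ n → 0 < σ0 n)
    (hσ1 : ∀ n : ℕ, 1 ≤ n → 0 ≤ σ1 n)
    (hσm1 : ∀ n : ℕ, 1 ≤ n → 0 ≤ σm1 n)
    (hliminfσ0 : 0 < Filter.liminf (fun n : ℕ => ((σ0 n : ℝ) : EReal)) Filter.atTop)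
    (hlimsup1 :
      Filter.limsup
        (fun n : ℕ => ((σ1 n * Real.sqrt (ℓ (n + 1) / ℓ n) : ℝ) : EReal))
        Filter.atTop < ⊤)
    (hlimsupm1 :
      Filter.limsup
        (fun n : ℕ => ((σm1 n * Real.sqrt (ℓ (n - 1) / ℓ n) : ℝ) : EReal))
        Filter.atTop < ⊤)
    (hlimsupκ :
      Filter.limsup (fun n : ℕ => ((|κ n| / Real.sqrt (ℓ n) : ℝ) : EReal))
        Filter.atTop < ⊤)
    (heq : ∀ n : ℕ, 1 ≤ n →
      ℓ n = x n * (σ1 n * x (n + 1) + σ0 n * x n + σm1 n * x (n - 1)) + κ n * x n) :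
    (⊥ < Filter.liminf (fun n : ℕ => ((x n / Real.sqrt (ℓ n) : ℝ) : EReal)) Filter.atTop ↔
      Filter.limsup (fun n : ℕ => ((x n / Real.sqrt (ℓ n) : ℝ) : EReal)) Filter.atTop < ⊤) := by
  have hone_le : ∀ᶠ n : ℕ in atTop, 1 ≤ n := eventually_ge_atTop 1
  exact stmt7_general ℓ σ1 σ0 σm1 κ x (hone_le.mono hℓ) (hone_le.mono hσ1) (hone_le.mono hσm1)
    hliminfσ0 hlimsup1 hlimsupm1 hlimsupκ (hone_le.mono fun n hn => (heq n hn).ge)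
end

section
/- Let n ≥ 2, ℓ_n > 0, σ_{n,0} > 0, σ_{n,1} ≥ 0, σ_{n,-1} ≥ 0, κ_n ∈ ℝ, set σ_n := max(σ_{n,-1}, σ_{n,1}), and assume σ_n ≤ σ_{n,0} < 2σ_n and −2(σ_{n,0} − σ_n)√ℓ_n ≤ κ_n √(2σ_n − σ_{n,0}). If x_{n-1} ≥ 0, x_n > 0, x_{n+1} ≥ 0 are real numbers with ℓ_n = x_n (σ_{n,1} x_{n+1} + σ_{n,0} x_n + σ_{n,-1} x_{n-1}) + κ_n x_n, then x_n ≤ √ℓ_n / √(2σ_n − σ_{n,0}). -/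
/-!
Dropping the nonnegative neighbor terms gives `σₙ₀ xₙ² + κₙ xₙ ≤ ℓₙ`. The quadratic
`p t = σₙ₀ t² + κₙ t - ℓₙ` changes sign only once on `(0, ∞)`, because `p t / t` is strictly
increasing there. Since `-2 (σₙ₀ - σₙ) = (2 σₙ - σₙ₀) - σₙ₀`, the condition on `κₙ` says exactly
that `p` is nonnegative at `t = √ℓₙ / √(2 σₙ - σₙ₀)`, so `xₙ` cannot exceed this `t`.
-/

theorem le_of_quadratic_le_of_le_quadratic {R : Type*} [CommRing R] [LinearOrder R]
    [IsStrictOrderedRing R] {s κ ℓ x y : R} (hs : 0 ≤ s) (hℓ : 0 < ℓ) (hy : 0 < y)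
    (hxℓ : s * x ^ 2 + κ * x ≤ ℓ) (hyℓ : ℓ ≤ s * y ^ 2 + κ * y) : x ≤ y := by
  by_contra! hyx
  have hx : 0 < x := hy.trans hyx
  have hcross : x * ℓ + s * x * y * (x - y) ≤ y * ℓ :=
    calc
      x * ℓ + s * x * y * (x - y)
          ≤ x * (s * y ^ 2 + κ * y) + s * x * y * (x - y) := by gcongr
      _ = y * (s * x ^ 2 + κ * x) := by ring
      _ ≤ y * ℓ := by gcongr
  have hgap : 0 ≤ s * x * y * (x - y) :=
    mul_nonneg (by positivity) (sub_nonneg.mpr hyx.le)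
  have hlt : y * ℓ < x * ℓ := by gcongr
  linarith

theorem le_quadratic_sqrt_div_sqrt_iff {s κ ℓ c : ℝ} (hℓ : 0 < ℓ) (hc : 0 < c) :
    ℓ ≤ s * (√ℓ / √c) ^ 2 + κ * (√ℓ / √c) ↔ (c - s) * √ℓ ≤ κ * √c := by
  have hfactor : s * (√ℓ / √c) ^ 2 + κ * (√ℓ / √c) - ℓ
      = √ℓ / √c ^ 2 * (κ * √c - (c - s) * √ℓ) := by
    have hc_ne : √c ≠ 0 := (Real.sqrt_pos.mpr hc).ne'
    field_simp
    linear_combination c * Real.sq_sqrt hℓ.le - ℓ * Real.sq_sqrt hc.le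
  rw [← sub_nonneg, hfactor, mul_nonneg_iff_of_pos_left (by positivity), sub_nonneg]

theorem stmt13_general {ℓ σ σ1 σ0 σm1 κ xm1 x xp1 : ℝ}
    (hℓ : 0 < ℓ) (hσ0 : 0 ≤ σ0) (hσ1 : 0 ≤ σ1) (hσm1 : 0 ≤ σm1) (hσ : σ0 < 2 * σ)
    (hκ : -2 * (σ0 - σ) * √ℓ ≤ κ * √(2 * σ - σ0))
    (hxm1 : 0 ≤ xm1) (hx : 0 ≤ x) (hxp1 : 0 ≤ xp1)
    (hle : x * (σ1 * xp1 + σ0 * x + σm1 * xm1) + κ * x ≤ ℓ) :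
    x ≤ √ℓ / √(2 * σ - σ0) := by
  have hc : 0 < 2 * σ - σ0 := sub_pos.mpr hσ
  have hquad : σ0 * x ^ 2 + κ * x ≤ ℓ := by
    have hneighbors : 0 ≤ x * (σ1 * xp1 + σm1 * xm1) := by positivity
    linarith
  have hbound : ℓ ≤ σ0 * (√ℓ / √(2 * σ - σ0)) ^ 2 + κ * (√ℓ / √(2 * σ - σ0)) :=
    (le_quadratic_sqrt_div_sqrt_iff hℓ hc).mpr (by linarith)
  exact le_of_quadratic_le_of_le_quadratic hσ0 hℓ (by positivity) hquad hbound

/-- A priori bound under condition (✧) for `n ≥ 2`: if `σₙ ≤ σₙ₀ < 2σₙ` (where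
`σₙ := max(σₙ₋₁, σₙ₁)`) and `−2(σₙ₀ − σₙ)√ℓₙ ≤ κₙ√(2σₙ − σₙ₀)`, then any positive term
`xₙ` of a solution with nonnegative neighbors satisfies `xₙ ≤ √ℓₙ/√(2σₙ − σₙ₀)`. -/
theorem stmt13 (n : ℕ) (hn : 2 ≤ n) (ℓn σ1 σ0 σm1 κn : ℝ)
    (hℓ : 0 < ℓn) (hσ0 : 0 < σ0) (hσ1 : 0 ≤ σ1) (hσm1 : 0 ≤ σm1)
    (hlow : max σm1 σ1 ≤ σ0) (hhigh : σ0 < 2 * max σm1 σ1)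
    (hκ : -2 * (σ0 - max σm1 σ1) * Real.sqrt ℓn ≤ κn * Real.sqrt (2 * max σm1 σ1 - σ0))
    (xnm1 xn xnp1 : ℝ) (hxnm1 : 0 ≤ xnm1) (hxn : 0 < xn) (hxnp1 : 0 ≤ xnp1)
    (heq : ℓn = xn * (σ1 * xnp1 + σ0 * xn + σm1 * xnm1) + κn * xn) :
    xn ≤ Real.sqrt ℓn / Real.sqrt (2 * max σm1 σ1 - σ0) :=
  stmt13_general hℓ hσ0.le hσ1 hσm1 hhigh hκ hxnm1 hxn.le hxnp1 heq.ge
end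

section
/- Let ℓ₁ > 0, σ_{1,0} > 0, σ_{1,1} ≥ 0, σ_{1,-1} ≥ 0, κ₁ ∈ ℝ, x_0 ∈ ℝ, set σ₁ := max(σ_{1,-1}, σ_{1,1}), and assume σ₁ ≤ σ_{1,0} < 2σ₁ and −2(σ_{1,0} − σ₁)√ℓ₁ ≤ (σ_{1,-1} x_0 + κ₁)√(2σ₁ − σ_{1,0}). If x_1 > 0 and x_2 ≥ 0 are real numbers with ℓ₁ = x_1 (σ_{1,1} x_2 + σ_{1,0} x_1 + σ_{1,-1} x_0) + κ₁ x_1, then x_1 ≤ √ℓ₁ / √(2σ₁ − σ_{1,0}). -/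
/-!
Put `f t = σ₁,₁ x₂ + σ₁,₀ t + σ₁,₋₁ x₀ + κ₁`, so that the equation reads `x₁ f(x₁) = ℓ₁`. With
`d = √(2σ₁ - σ₁,₀)` and `r = √ℓ₁ / d`, the lower bound on `σ₁,₋₁ x₀ + κ₁` says precisely that
`√ℓ₁ d ≤ σ₁,₀ r + σ₁,₋₁ x₀ + κ₁`, whence `√ℓ₁ d ≤ f r` and `x₁ f(x₁) = ℓ₁ ≤ r f(r)`. As `f` is
monotone and `f r > 0`, the product `t f(t)` exceeds `r f(r)` for every `t > r`, so `x₁ ≤ r`.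
-/

theorem le_of_mul_apply_le_mul_apply {R : Type*} [Semiring R] [LinearOrder R]
    [IsStrictOrderedRing R] {f : R → R} {r x : R} (hf : MonotoneOn f (Set.Ici r)) (hr : 0 ≤ r)
    (hfr : 0 < f r) (h : x * f x ≤ r * f r) : x ≤ r := by
  by_contra! hrx
  exact h.not_gt <|
    mul_lt_mul hrx (hf Set.self_mem_Ici hrx.le hrx.le) hfr (hr.trans hrx.le)

theorem mul_le_mul_div_add_iff {K : Type*} [Field K] [LinearOrder K] [IsStrictOrderedRing K]
    {a c d s : K} (hd : 0 < d) :
    s * d ≤ a * (s / d) + c ↔ (d ^ 2 - a) * s ≤ c * d := by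
  have hscale : (a * (s / d) + c) * d = a * s + c * d := by field_simp
  rw [← mul_le_mul_iff_left₀ hd, hscale]
  constructor <;> intro h <;> linarith

theorem stmt14_general {ℓ1 σ11 σ10 σ1m1 σ1 κ1 x0 x1 x2 : ℝ}
    (hℓ : 0 < ℓ1) (hσ10 : 0 ≤ σ10) (hσ11 : 0 ≤ σ11) (hhigh : σ10 < 2 * σ1)
    (hκ : -2 * (σ10 - σ1) * √ℓ1 ≤ (σ1m1 * x0 + κ1) * √(2 * σ1 - σ10)) (hx2 : 0 ≤ x2)
    (hle : x1 * (σ11 * x2 + σ10 * x1 + σ1m1 * x0) + κ1 * x1 ≤ ℓ1) :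
    x1 ≤ √ℓ1 / √(2 * σ1 - σ10) := by
  set d := √(2 * σ1 - σ10)
  set r := √ℓ1 / d with hr
  let f : ℝ → ℝ := fun t ↦ σ11 * x2 + σ10 * t + σ1m1 * x0 + κ1
  have hs : 0 < √ℓ1 := Real.sqrt_pos.mpr hℓ
  have hd : 0 < d := Real.sqrt_pos.mpr (sub_pos.mpr hhigh)
  have hd_sq : d ^ 2 = 2 * σ1 - σ10 := Real.sq_sqrt (sub_pos.mpr hhigh).le
  have hr_pos : 0 < r := div_pos hs hd
  have hf : Monotone f := fun t u htu ↦ by dsimp only [f]; gcongr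
  have hthreshold : √ℓ1 * d ≤ σ10 * r + (σ1m1 * x0 + κ1) :=
    (mul_le_mul_div_add_iff hd).mpr (by rw [hd_sq]; linarith)
  have hfr : √ℓ1 * d ≤ f r := by linarith [mul_nonneg hσ11 hx2]
  refine le_of_mul_apply_le_mul_apply (hf.monotoneOn _) hr_pos.le
    ((mul_pos hs hd).trans_le hfr) ?_
  calc x1 * f x1 = x1 * (σ11 * x2 + σ10 * x1 + σ1m1 * x0) + κ1 * x1 := by ring
    _ ≤ ℓ1 := hle
    _ = √ℓ1 ^ 2 := (Real.sq_sqrt hℓ.le).symm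
    _ = r * (√ℓ1 * d) := by rw [hr]; field_simp
    _ ≤ r * f r := by gcongr

/-- A priori bound under condition (✧) at `n = 1`: if `σ₁ ≤ σ₁,₀ < 2σ₁` (where
`σ₁ := max(σ₁,₋₁, σ₁,₁)`) and `−2(σ₁,₀ − σ₁)√ℓ₁ ≤ (σ₁,₋₁ x₀ + κ₁)√(2σ₁ − σ₁,₀)`,
then `x₁ ≤ √ℓ₁/√(2σ₁ − σ₁,₀)`. -/
theorem stmt14 (ℓ1 σ11 σ10 σ1m1 κ1 x0 : ℝ)
    (hℓ : 0 < ℓ1) (hσ10 : 0 < σ10) (hσ11 : 0 ≤ σ11) (hσ1m1 : 0 ≤ σ1m1)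
    (hlow : max σ1m1 σ11 ≤ σ10) (hhigh : σ10 < 2 * max σ1m1 σ11)
    (hκ : -2 * (σ10 - max σ1m1 σ11) * Real.sqrt ℓ1 ≤
      (σ1m1 * x0 + κ1) * Real.sqrt (2 * max σ1m1 σ11 - σ10))
    (x1 x2 : ℝ) (hx1 : 0 < x1) (hx2 : 0 ≤ x2)
    (heq : ℓ1 = x1 * (σ11 * x2 + σ10 * x1 + σ1m1 * x0) + κ1 * x1) :
    x1 ≤ Real.sqrt ℓ1 / Real.sqrt (2 * max σ1m1 σ11 - σ10) :=
  stmt14_general hℓ hσ10.le hσ11 hhigh hκ hx2 heq.ge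
end

section
/- Let n ≥ 2, ℓ_n > 0, σ_{n,0} > 0, σ_{n,1} ≥ 0, σ_{n,-1} ≥ 0, κ_n ∈ ℝ. If u_{n-1}, u_n, u_{n+1} > 0 and v_{n-1}, v_n, v_{n+1} > 0 both satisfy ℓ_n = y_n (σ_{n,1} y_{n+1} + σ_{n,0} y_n + σ_{n,-1} y_{n-1}) + κ_n y_n (with y = u and y = v respectively), then (u_n − v_n)² ≤ 8 (ℓ_n/σ_{n,0} + (κ_n⁻)²/σ_{n,0}²), where κ_n⁻ := (|κ_n| − κ_n)/2. -/
/-! Dropping the nonnegative neighbour terms from the equation leaves `σ₀ y² ≤ κ⁻ y + ℓ`. Dividing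
by `σ₀` and absorbing the linear term with `2 (κ⁻/σ₀) y ≤ (κ⁻/σ₀)² + y²` gives
`y² ≤ 2 ℓ/σ₀ + (κ⁻/σ₀)²`. As both solutions are nonnegative, `(u - v)²` is at most
`max (u²) (v²)`, hence obeys the same bound. -/

section OrderedRing

variable {R : Type*} [CommRing R] [LinearOrder R] [IsOrderedRing R]

lemma sub_sq_le_max_sq {u v : R} (hu : 0 ≤ u) (hv : 0 ≤ v) :
    (u - v) ^ 2 ≤ max (u ^ 2) (v ^ 2) := by
  rcases le_total v u with h | h
  · exact le_max_of_le_left (pow_le_pow_left₀ (sub_nonneg.mpr h) (sub_le_self u hv) 2)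
  · rw [sub_sq_comm]
    exact le_max_of_le_right (pow_le_pow_left₀ (sub_nonneg.mpr h) (sub_le_self v hu) 2)

lemma mul_sq_le_negPart_mul_add {ℓ σ1 σ0 σm1 κ ym1 y yp1 : R} (hσ1 : 0 ≤ σ1) (hσm1 : 0 ≤ σm1)
    (hym1 : 0 ≤ ym1) (hy : 0 ≤ y) (hyp1 : 0 ≤ yp1)
    (h : y * (σ1 * yp1 + σ0 * y + σm1 * ym1) + κ * y ≤ ℓ) :
    σ0 * y ^ 2 ≤ κ⁻ * y + ℓ := by
  have hneighbours : 0 ≤ y * (σ1 * yp1 + σm1 * ym1) := by positivity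
  have hκ : -κ * y ≤ κ⁻ * y := mul_le_mul_of_nonneg_right (neg_le_negPart κ) hy
  calc σ0 * y ^ 2
      ≤ σ0 * y ^ 2 + y * (σ1 * yp1 + σm1 * ym1) := le_add_of_nonneg_right hneighbours
    _ = -κ * y + (y * (σ1 * yp1 + σ0 * y + σm1 * ym1) + κ * y) := by ring
    _ ≤ κ⁻ * y + ℓ := add_le_add hκ h

end OrderedRing

section OrderedField

variable {K : Type*} [Field K] [LinearOrder K] [IsStrictOrderedRing K]

lemma negPart_eq_abs_sub_div_two (a : K) : a⁻ = (|a| - a) / 2 := by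
  rw [abs_sub_eq_two_nsmul_negPart, nsmul_eq_mul, Nat.cast_ofNat,
    mul_div_cancel_left₀ _ two_ne_zero]

lemma sq_le_of_mul_sq_le_mul_add {a b c y : K} (ha : 0 < a) (h : a * y ^ 2 ≤ b * y + c) :
    y ^ 2 ≤ 2 * (c / a) + (b / a) ^ 2 := by
  have hdiv : y ^ 2 ≤ b / a * y + c / a := by
    rw [div_mul_eq_mul_div, ← add_div, le_div_iff₀' ha]
    exact h
  linarith [two_mul_le_add_sq (b / a) y]

theorem stmt15_general {ℓ σ1 σ0 σm1 κ um1 u up1 vm1 v vp1 : K}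
    (hσ0 : 0 < σ0) (hσ1 : 0 ≤ σ1) (hσm1 : 0 ≤ σm1)
    (hum1 : 0 ≤ um1) (hu : 0 ≤ u) (hup1 : 0 ≤ up1)
    (hvm1 : 0 ≤ vm1) (hv : 0 ≤ v) (hvp1 : 0 ≤ vp1)
    (hequ : u * (σ1 * up1 + σ0 * u + σm1 * um1) + κ * u ≤ ℓ)
    (heqv : v * (σ1 * vp1 + σ0 * v + σm1 * vm1) + κ * v ≤ ℓ) :
    (u - v) ^ 2 ≤ 2 * (ℓ / σ0) + (κ⁻ / σ0) ^ 2 :=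
  (sub_sq_le_max_sq hu hv).trans <| max_le
    (sq_le_of_mul_sq_le_mul_add hσ0 (mul_sq_le_negPart_mul_add hσ1 hσm1 hum1 hu hup1 hequ))
    (sq_le_of_mul_sq_le_mul_add hσ0 (mul_sq_le_negPart_mul_add hσ1 hσm1 hvm1 hv hvp1 heqv))

end OrderedField

/-- Bound on the difference of the `n`-th terms of two positive solutions (`n ≥ 2`):
`(uₙ − vₙ)² ≤ 8(ℓₙ/σₙ₀ + (κₙ⁻)²/σₙ₀²)`, where `κ⁻ := (|κ| − κ)/2`. -/
theorem stmt15 (n : ℕ) (hn : 2 ≤ n) (ℓn σ1 σ0 σm1 κn : ℝ)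
    (hℓ : 0 < ℓn) (hσ0 : 0 < σ0) (hσ1 : 0 ≤ σ1) (hσm1 : 0 ≤ σm1)
    (unm1 un unp1 vnm1 vn vnp1 : ℝ)
    (hunm1 : 0 < unm1) (hun : 0 < un) (hunp1 : 0 < unp1)
    (hvnm1 : 0 < vnm1) (hvn : 0 < vn) (hvnp1 : 0 < vnp1)
    (hequ : ℓn = un * (σ1 * unp1 + σ0 * un + σm1 * unm1) + κn * un)
    (heqv : ℓn = vn * (σ1 * vnp1 + σ0 * vn + σm1 * vnm1) + κn * vn) :
    (un - vn) ^ 2 ≤ 8 * (ℓn / σ0 + ((|κn| - κn) / 2) ^ 2 / σ0 ^ 2) := by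
  rw [← negPart_eq_abs_sub_div_two, ← div_pow]
  linarith [stmt15_general hσ0 hσ1 hσm1 hunm1.le hun.le hunp1.le hvnm1.le hvn.le hvnp1.le
    hequ.ge heqv.ge, div_pos hℓ hσ0, sq_nonneg (κn⁻ / σ0)]
end

section
/- Let n ≥ 1, ℓ_n > 0, σ_{n,0} > 0, σ_{n,1} ≥ 0, σ_{n,-1} ≥ 0, κ_n ∈ ℝ, and set σ_n := max(σ_{n,-1}, σ_{n,1}). If u_{n-1}, u_n, u_{n+1} and v_{n-1}, v_n, v_{n+1} are real numbers with u_n > 0 and v_n > 0 that both satisfy ℓ_n = y_n (σ_{n,1} y_{n+1} + σ_{n,0} y_n + σ_{n,-1} y_{n-1}) + κ_n y_n (with y = u and y = v respectively), and if moreover 2σ_n ≤ σ_{n,0} + ℓ_n/(u_n v_n), then 2|u_n − v_n| ≤ |u_{n+1} − v_{n+1}| + |u_{n-1} − v_{n-1}|. -/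
/-!
Dividing each equation by its central value turns the nonlinear term into `ℓ / u`, and
`ℓ / v - ℓ / u = ℓ / (u * v) * (u - v)`. The differences of two solutions therefore satisfy a
three-term linear relation, whose central coefficient `σ0 + ℓ / (u * v)` dominates the outer
ones in norm.
-/

section ThreeTermRelation

variable {𝕜 E : Type*} [SeminormedAddCommGroup E]

theorem norm_smul_add_smul_le_max_mul [SeminormedRing 𝕜] [Module 𝕜 E] [IsBoundedSMul 𝕜 E]
    (a b : 𝕜) (x y : E) : ‖a • x + b • y‖ ≤ max ‖a‖ ‖b‖ * (‖x‖ + ‖y‖) :=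
  calc
    ‖a • x + b • y‖ ≤ ‖a‖ * ‖x‖ + ‖b‖ * ‖y‖ :=
      norm_add_le_of_le (norm_smul_le a x) (norm_smul_le b y)
    _ ≤ max ‖a‖ ‖b‖ * ‖x‖ + max ‖a‖ ‖b‖ * ‖y‖ := by
      gcongr
      exacts [le_max_left _ _, le_max_right _ _]
    _ = max ‖a‖ ‖b‖ * (‖x‖ + ‖y‖) := (mul_add _ _ _).symm

theorem two_mul_norm_le_of_smul_add_smul_add_smul_eq_zero [NormedRing 𝕜] [Module 𝕜 E]
    [NormSMulClass 𝕜 E] {a b c : 𝕜} {x y z : E} (h : a • x + b • y + c • z = 0) (hb : b ≠ 0)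
    (hdom : 2 * max ‖a‖ ‖c‖ ≤ ‖b‖) : 2 * ‖y‖ ≤ ‖x‖ + ‖z‖ := by
  have hy : b • y = -(a • x + c • z) := by
    rw [eq_neg_iff_add_eq_zero, ← h]
    abel
  have hbound : ‖b‖ * ‖y‖ ≤ max ‖a‖ ‖c‖ * (‖x‖ + ‖z‖) := by
    rw [← norm_smul, hy, norm_neg]
    exact norm_smul_add_smul_le_max_mul a c x z
  -- The factor to cancel is `‖b‖`, since the maximum may vanish.
  refine le_of_mul_le_mul_left ?_ (norm_pos_iff.mpr hb)
  calc
    ‖b‖ * (2 * ‖y‖) = 2 * (‖b‖ * ‖y‖) := mul_left_comm _ _ _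
    _ ≤ 2 * (max ‖a‖ ‖c‖ * (‖x‖ + ‖z‖)) := by gcongr
    _ = 2 * max ‖a‖ ‖c‖ * (‖x‖ + ‖z‖) := (mul_assoc _ _ _).symm
    _ ≤ ‖b‖ * (‖x‖ + ‖z‖) := by gcongr

end ThreeTermRelation

section DifferenceEquation

variable {K : Type*} {ℓ σ1 σ0 σm1 κ um1 u up1 vm1 v vp1 : K}

theorem three_term_relation_of_sub_solutions [Field K] (hu : u ≠ 0) (hv : v ≠ 0)
    (hequ : ℓ = u * (σ1 * up1 + σ0 * u + σm1 * um1) + κ * u)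
    (heqv : ℓ = v * (σ1 * vp1 + σ0 * v + σm1 * vm1) + κ * v) :
    σ1 * (up1 - vp1) + (σ0 + ℓ / (u * v)) * (u - v) + σm1 * (um1 - vm1) = 0 := by
  have hdivu : ℓ / u = σ1 * up1 + σ0 * u + σm1 * um1 + κ := by
    rw [div_eq_iff hu]
    linear_combination hequ
  have hdivv : ℓ / v = σ1 * vp1 + σ0 * v + σm1 * vm1 + κ := by
    rw [div_eq_iff hv]
    linear_combination heqv
  have hsplit : ℓ / (u * v) * (u - v) = ℓ / v - ℓ / u := by field_simp
  linear_combination hsplit + hdivv - hdivu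

theorem stmt16_general [NormedField K] (hu : u ≠ 0) (hv : v ≠ 0)
    (hequ : ℓ = u * (σ1 * up1 + σ0 * u + σm1 * um1) + κ * u)
    (heqv : ℓ = v * (σ1 * vp1 + σ0 * v + σm1 * vm1) + κ * v)
    (hne : σ0 + ℓ / (u * v) ≠ 0)
    (hcond : 2 * max ‖σm1‖ ‖σ1‖ ≤ ‖σ0 + ℓ / (u * v)‖) :
    2 * ‖u - v‖ ≤ ‖up1 - vp1‖ + ‖um1 - vm1‖ :=
  two_mul_norm_le_of_smul_add_smul_add_smul_eq_zero
    (three_term_relation_of_sub_solutions hu hv hequ heqv) hne (by rwa [max_comm])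

end DifferenceEquation

/-- Convexity step for the difference of two solutions: if `u` and `v` both solve the
equation at index `n ≥ 1`, with `uₙ > 0`, `vₙ > 0`, and `2σₙ ≤ σₙ₀ + ℓₙ/(uₙvₙ)` where
`σₙ := max(σₙ₋₁, σₙ₁)`, then `2|uₙ − vₙ| ≤ |uₙ₊₁ − vₙ₊₁| + |uₙ₋₁ − vₙ₋₁|`. -/
theorem stmt16 (n : ℕ) (hn : 1 ≤ n) (ℓn σ1 σ0 σm1 κn : ℝ)
    (hℓ : 0 < ℓn) (hσ0 : 0 < σ0) (hσ1 : 0 ≤ σ1) (hσm1 : 0 ≤ σm1)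
    (unm1 un unp1 vnm1 vn vnp1 : ℝ)
    (hun : 0 < un) (hvn : 0 < vn)
    (hequ : ℓn = un * (σ1 * unp1 + σ0 * un + σm1 * unm1) + κn * un)
    (heqv : ℓn = vn * (σ1 * vnp1 + σ0 * vn + σm1 * vnm1) + κn * vn)
    (hcond : 2 * max σm1 σ1 ≤ σ0 + ℓn / (un * vn)) :
    2 * |un - vn| ≤ |unp1 - vnp1| + |unm1 - vnm1| := by
  have hpos : 0 < σ0 + ℓn / (un * vn) := by positivity
  exact stmt16_general hun.ne' hvn.ne' hequ heqv hpos.ne' <| by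
    rwa [Real.norm_of_nonneg hσm1, Real.norm_of_nonneg hσ1, Real.norm_of_nonneg hpos.le]
end

section
/- If a real sequence (x_n)_{n≥0} satisfies n = x_n (x_{n+1} + x_{n-1}) for all n ≥ 1, then x_{n-1} x_n = n/2 − 1/4 + (−1)^n (1/4 − x_0 x_1) for all n ≥ 1. -/
section FirstOrderRecurrence

variable {R : Type*} [Ring R]

theorem sub_eq_neg_one_pow_mul_sub_of_succ_add_eq {y z : ℕ → R}
    (h : ∀ n, y (n + 1) + y n = z (n + 1) + z n) (n : ℕ) :
    y n - z n = (-1) ^ n * (y 0 - z 0) := by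
  induction n with
  | zero => simp
  | succ n ih =>
    calc y (n + 1) - z (n + 1) = -(y n - z n) := by
          rw [neg_sub, sub_eq_sub_iff_add_eq_add, h, add_comm]
      _ = (-1) ^ (n + 1) * (y 0 - z 0) := by rw [ih, pow_succ', neg_one_mul, neg_mul]

-- `(2 * n + 1) / 4` is a particular solution; the factor `4` avoids dividing in `R`.
theorem four_mul_eq_of_succ_add_eq {y : ℕ → R} (h : ∀ n, y (n + 1) + y n = n + 1) (n : ℕ) :
    4 * y n = 2 * n + 1 + (-1) ^ n * (4 * y 0 - 1) := by
  have same_recurrence (k : ℕ) :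
      4 * y (k + 1) + 4 * y k = (2 * ((k + 1 : ℕ) : R) + 1) + (2 * (k : R) + 1) := by
    rw [← mul_add, h]
    push_cast
    noncomm_ring
  have difference := sub_eq_neg_one_pow_mul_sub_of_succ_add_eq
    (y := fun k ↦ 4 * y k) (z := fun k ↦ 2 * (k : R) + 1) same_recurrence n
  simpa only [Nat.cast_zero, mul_zero, zero_add] using eq_add_of_sub_eq' difference

end FirstOrderRecurrence

theorem stmt19_general {R : Type*} [CommRing R] (x : ℕ → R)
    (heq : ∀ n : ℕ, 1 ≤ n → (n : R) = x n * (x (n + 1) + x (n - 1))) :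
    ∀ n : ℕ, 1 ≤ n →
      4 * (x (n - 1) * x n) = 2 * n - 1 + (-1) ^ n * (1 - 4 * (x 0 * x 1)) := by
  intro n hn
  obtain ⟨m, rfl⟩ := Nat.exists_eq_add_of_le' hn
  have product_recurrence (k : ℕ) : x (k + 1) * x (k + 2) + x k * x (k + 1) = k + 1 := by
    have hk := heq (k + 1) k.succ_pos
    rw [Nat.add_sub_cancel, Nat.cast_succ] at hk
    rw [hk]
    ring
  have solution := four_mul_eq_of_succ_add_eq (y := fun k ↦ x k * x (k + 1)) product_recurrence m
  rw [Nat.add_sub_cancel, solution]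
  push_cast
  ring

/-- If `n = xₙ(xₙ₊₁ + xₙ₋₁)` for all `n ≥ 1`, then
`xₙ₋₁ xₙ = n/2 − 1/4 + (−1)ⁿ (1/4 − x₀x₁)` for all `n ≥ 1`. -/
theorem stmt19 (x : ℕ → ℝ)
    (heq : ∀ n : ℕ, 1 ≤ n → (n : ℝ) = x n * (x (n + 1) + x (n - 1))) :
    ∀ n : ℕ, 1 ≤ n →
      x (n - 1) * x n = (n : ℝ) / 2 - 1 / 4 + (-1 : ℝ) ^ n * (1 / 4 - x 0 * x 1) := by
  intro n hn
  linear_combination (1 / 4) * stmt19_general x heq n hn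
end
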